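/- arXiv:1803.09306 — 6 statements merged into one kernel-verified Lean document; each statement's English description precedes it below -/
import Mathlib

section
/- Let d ≥ 2 and let ξ ∈ ℝ^d \ ℚ^d satisfy ξ₁² + ⋯ + ξ_d² = 1. Then for every ε > 0 there exist arbitrarily large T such that T · Ψ_ξ(T) ≥ 1/4 − ε. -/
/-- `Ψ_ξ(T)`: the minimum of `|qξ - a|²/q` over integer vectors `(q, a₁, …, a_d)` with
`1 ≤ q ≤ T` and `a₁²+⋯+a_d² = q²`. -/
noncomputable def PsiSphere {d : ℕ} (ξ : Fin d → ℝ) (T : ℝ) : ℝ :=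
  sInf {v : ℝ | ∃ (q : ℤ) (a : Fin d → ℤ),
    1 ≤ q ∧ (q : ℝ) ≤ T ∧ (∑ i, (a i) ^ 2) = q ^ 2 ∧
    v = (∑ i, ((q : ℝ) * ξ i - (a i : ℝ)) ^ 2) / (q : ℝ)}

/-- value of a vector -/
noncomputable def valS {d : ℕ} (ξ : Fin d → ℝ) (q : ℤ) (a : Fin d → ℤ) : ℝ :=
  (∑ i, ((q : ℝ) * ξ i - (a i : ℝ)) ^ 2) / (q : ℝ)

theorem valS_nonneg {d : ℕ} (ξ : Fin d → ℝ) (q : ℤ) (a : Fin d → ℤ) (hq : 1 ≤ q) :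
    0 ≤ valS ξ q a := by
  have : (0:ℝ) ≤ q := by exact_mod_cast (by omega : (0:ℤ) ≤ q)
  unfold valS
  positivity

theorem valS_pos {d : ℕ} (ξ : Fin d → ℝ)
    (hirr : ¬ ∃ x : Fin d → ℚ, (fun i => (x i : ℝ)) = ξ) (q : ℤ) (a : Fin d → ℤ) (hq : 1 ≤ q) :
    0 < valS ξ q a := by
  have hq0 : (0:ℝ) < q := by exact_mod_cast (by omega : (0:ℤ) < q)
  refine lt_of_le_of_ne (valS_nonneg ξ q a hq) fun h => hirr ⟨fun i => (a i : ℚ) / q, ?_⟩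
  have h0 : ∑ i, ((q : ℝ) * ξ i - (a i : ℝ)) ^ 2 = 0 := by
    unfold valS at h
    rcases div_eq_zero_iff.1 h.symm with h | h
    · exact h
    · exact absurd h hq0.ne'
  rw [Finset.sum_eq_zero_iff_of_nonneg (fun i _ => sq_nonneg _)] at h0
  funext i
  have := pow_eq_zero_iff (two_ne_zero) |>.1 (h0 i (Finset.mem_univ i))
  push_cast
  rw [div_eq_iff hq0.ne']
  linarith

theorem valS_key {d : ℕ} (ξ : Fin d → ℝ) (q q' : ℤ) (a a' : Fin d → ℤ) (hq : 1 ≤ q)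
    (hqq : q ≤ q') (ha : ∑ i, (a i) ^ 2 = q ^ 2) (ha' : ∑ i, (a' i) ^ 2 = q' ^ 2)
    (hlt : valS ξ q' a' < valS ξ q a) : 1 / 2 ≤ q' * valS ξ q a := by
  have hq0 : (0:ℝ) < q := by exact_mod_cast (by omega : (0:ℤ) < q)
  have hqq0 : (q:ℝ) ≤ q' := by exact_mod_cast hqq
  have hq0' : (0:ℝ) < q' := by linarith
  have hc' := valS_nonneg ξ q' a' (by omega)
  have eA : ∑ i, ((q : ℝ) * ξ i - (a i : ℝ)) ^ 2 = q * valS ξ q a := by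
    unfold valS; field_simp
  have eB : ∑ i, ((q' : ℝ) * ξ i - (a' i : ℝ)) ^ 2 = q' * valS ξ q' a' := by
    unfold valS; field_simp
  set c := valS ξ q a
  set c' := valS ξ q' a'
  have e1 : ∑ i, (q' * a i - q * a' i) ^ 2 = 2 * q * q' * (q * q' - ∑ i, a i * a' i) := by
    have : ∀ i, (q' * a i - q * a' i) ^ 2
      = q' ^ 2 * a i ^ 2 + q ^ 2 * a' i ^ 2 - 2 * q * q' * (a i * a' i) := fun i => by ring
    simp only [this, Finset.sum_sub_distrib, Finset.sum_add_distrib, ← Finset.mul_sum, ha, ha']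
    ring
  set m := q * q' - ∑ i, a i * a' i
  have e1r : ∑ i, ((q':ℝ) * a i - q * a' i) ^ 2 = 2 * q * q' * m := by exact_mod_cast e1
  have hle : ∑ i, ((q':ℝ) * a i - q * a' i) ^ 2 ≤ 2 * (q' ^ 2 * (q * c) + q ^ 2 * (q' * c')) := by
    rw [← eA, ← eB, Finset.mul_sum, Finset.mul_sum, ← Finset.sum_add_distrib, Finset.mul_sum]
    refine Finset.sum_le_sum fun i _ => ?_
    nlinarith [sq_nonneg (q' * (q * ξ i - a i) + q * (q' * ξ i - a' i))]
  have hmle : (m:ℝ) ≤ q' * c + q * c' := by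
    have : (2 * q * q' : ℝ) * m ≤ (2 * q * q') * (q' * c + q * c') := by
      rw [← e1r]; refine hle.trans (le_of_eq ?_); ring
    exact le_of_mul_le_mul_left this (by positivity)
  have hm0 : 0 ≤ m := by
    have h : (0:ℤ) ≤ 2 * q * q' * m := by rw [← e1]; positivity
    have : 0 < 2 * q * q' := by have : 0 < q' := by omega
                                positivity
    exact nonneg_of_mul_nonneg_right h this
  have hmne : m ≠ 0 := by
    intro h
    rw [h] at e1r
    simp only [Int.cast_zero, mul_zero] at e1r
    rw [Finset.sum_eq_zero_iff_of_nonneg (fun i _ => sq_nonneg _)] at e1r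
    have e2 : (q':ℝ) ^ 2 * (q * c) = q ^ 2 * (q' * c') := by
      rw [← eA, ← eB, Finset.mul_sum, Finset.mul_sum]
      refine Finset.sum_congr rfl fun i hi => ?_
      have := pow_eq_zero_iff (two_ne_zero) |>.1 (e1r i hi)
      rw [← mul_pow, ← mul_pow]
      congr 1
      linarith
    have e3 : (q':ℝ) * c = q * c' := by
      have : (q * q' : ℝ) * (q' * c) = (q * q') * (q * c') := by linarith
      exact mul_left_cancel₀ (by positivity) this
    nlinarith
  have hm1 : (1:ℝ) ≤ m := by exact_mod_cast (by omega : 1 ≤ m)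
  nlinarith

/-- Theorem 3: for `d ≥ 2` and irrational `ξ` on the unit sphere, for every `ε > 0`
there exist arbitrarily large `T` with `T · Ψ_ξ(T) ≥ 1/4 - ε`. -/
theorem intrinsic_uniform_lower_bound
    (d : ℕ) (hd : 2 ≤ d) (ξ : Fin d → ℝ)
    (hirr : ¬ ∃ x : Fin d → ℚ, (fun i => (x i : ℝ)) = ξ)
    (hsphere : ∑ i, ξ i ^ 2 = 1) :
    ∀ ε : ℝ, 0 < ε → ∀ T₀ : ℝ, ∃ T : ℝ, T₀ ≤ T ∧
      T * PsiSphere ξ T ≥ 1 / 4 - ε := by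
  intro ε hε T₀
  by_contra hcon
  push Not at hcon
  obtain ⟨N, hN⟩ := exists_nat_ge (max T₀ 1)
  have hNT : T₀ ≤ N := (le_max_left _ _).trans hN
  have hN1 : 1 ≤ N := by exact_mod_cast (le_max_right _ _).trans hN
  let F : Finset (ℤ × (Fin d → ℤ)) :=
    ((Finset.Icc (1:ℤ) N) ×ˢ (Fintype.piFinset fun _ => Finset.Icc (-(N:ℤ)) N)).filter
      fun p => ∑ i, (p.2 i) ^ 2 = p.1 ^ 2
  let a₀ : Fin d → ℤ := Pi.single ⟨0, by omega⟩ 1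
  have ha₀ : ∑ i, (a₀ i) ^ 2 = 1 ^ 2 := by
    simp [a₀, Pi.single_apply, ite_pow]
  have hF : ∀ (q : ℤ) (a : Fin d → ℤ), 1 ≤ q → q ≤ N → ∑ i, (a i) ^ 2 = q ^ 2 → (q, a) ∈ F := by
    intro q a h1 h2 h3
    simp only [F, Finset.mem_filter, Finset.mem_product, Finset.mem_Icc, Fintype.mem_piFinset]
    refine ⟨⟨⟨h1, h2⟩, fun i => ?_⟩, h3⟩
    have : a i ^ 2 ≤ q ^ 2 := by
      rw [← h3]
      exact Finset.single_le_sum (f := fun i => a i ^ 2) (fun i _ => sq_nonneg _)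
        (Finset.mem_univ i)
    have := abs_le_of_sq_le_sq' this (by omega)
    omega
  obtain ⟨⟨q, a⟩, hqa, hmin⟩ := F.exists_min_image (fun p => valS ξ p.1 p.2)
    ⟨(1, a₀), hF 1 a₀ le_rfl (by exact_mod_cast hN1) ha₀⟩
  simp only [F, Finset.mem_filter, Finset.mem_product, Finset.mem_Icc] at hqa
  obtain ⟨⟨⟨hq1, hqN⟩, -⟩, ha⟩ := hqa
  have hc : 0 < valS ξ q a := valS_pos ξ hirr q a hq1
  -- lower bound for Psi
  have hlow : ∀ T : ℝ, 1 ≤ T → (∀ (q' : ℤ) (a' : Fin d → ℤ), 1 ≤ q' → (q' : ℝ) ≤ T →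
      ∑ i, (a' i) ^ 2 = q' ^ 2 → valS ξ q a ≤ valS ξ q' a') → valS ξ q a ≤ PsiSphere ξ T := by
    intro T hT h
    refine le_csInf ⟨_, 1, a₀, le_rfl, by simpa using hT, ha₀, rfl⟩ ?_
    rintro v ⟨q', a', h1, h2, h3, rfl⟩
    exact h q' a' h1 h2 h3
  have hex : ∃ n : ℕ, ∃ a' : Fin d → ℤ, 1 ≤ n ∧ ∑ i, (a' i) ^ 2 = (n:ℤ) ^ 2 ∧
      valS ξ n a' < valS ξ q a := by
    by_contra hno
    push Not at hno
    have hT1 : (1:ℝ) ≤ max (N:ℝ) (1 / valS ξ q a) := le_max_of_le_left (by exact_mod_cast hN1)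
    have h := hlow _ hT1 (fun q' a' h1 _ h3 => by
      lift q' to ℕ using by omega
      exact hno q' a' (by omega) h3)
    have h2 := hcon _ (hNT.trans (le_max_left _ (1 / valS ξ q a)))
    have h3 : 1 / valS ξ q a * valS ξ q a ≤
        max (N:ℝ) (1 / valS ξ q a) * PsiSphere ξ (max (N:ℝ) (1 / valS ξ q a)) :=
      mul_le_mul (le_max_right _ _) h hc.le (by linarith)
    rw [one_div_mul_cancel hc.ne'] at h3
    linarith
  classical
  obtain ⟨a', hn1, ha', hlt⟩ := Nat.find_spec hex
  have hlt' := fun m => Nat.find_min hex (m := m)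
  set n := Nat.find hex
  have hnN : N < n := by
    by_contra hle
    have := hmin _ (hF n a' (by omega) (by omega) ha')
    simp only at this
    linarith
  have key := valS_key ξ q n a a' hq1 (by omega) ha ha' hlt
  have hnN' : (N:ℝ) + 1 ≤ n := by exact_mod_cast hnN
  have hN1' : (1:ℝ) ≤ N := by exact_mod_cast hN1
  have h := hlow ((n:ℝ) - 1) (by linarith) (fun q' b h1 h2 h3 => by
    lift q' to ℕ using by omega
    by_contra hb
    have h2' : ((q':ℕ):ℝ) + 1 ≤ n := by push_cast at h2; linarith
    have h4 : q' < n := by exact_mod_cast h2'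
    exact hlt' q' h4 ⟨b, by omega, h3, not_le.1 hb⟩)
  have h2 := hcon ((n:ℝ) - 1) (by linarith)
  have h3 : ((n:ℝ) - 1) * valS ξ q a ≤ ((n:ℝ) - 1) * PsiSphere ξ ((n:ℝ) - 1) :=
    mul_le_mul_of_nonneg_left h (by linarith)
  push_cast at key
  nlinarith
end

section
/- Let d ≥ 2 and let ξ ∈ ℝ^d \ ℚ^d satisfy ξ₁² + ⋯ + ξ_d² = 1. Then the uniform Diophantine exponent for intrinsic approximation on the unit sphere satisfies ω̂ᵢ(ξ) = 1, where ω̂ᵢ(ξ) is the supremum of all real γ such that for every sufficiently large T the inequalities |ξ − α| ≤ 1/(q^{1/2} T^{γ/2}), 1 ≤ q ≤ T, are solvable in rational vectors α = (a₁/q, …, a_d/q) with (a₁/q)² + ⋯ + (a_d/q)² = 1. -/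
open Filter

/-- The "uniform intrinsic approximation at exponent `γ`" property on the unit sphere:
for every sufficiently large `T` there is a rational point `α = (a₁/q, …, a_d/q)` of the
unit sphere with `1 ≤ q ≤ T` and `|ξ - α| ≤ 1/(q^{1/2} T^{γ/2})`.
The uniform intrinsic Diophantine exponent `ω̂ᵢ(ξ)` is the supremum of such `γ`. -/
def IntrinsicUnifApprox {d : ℕ} (ξ : Fin d → ℝ) (γ : ℝ) : Prop :=
  ∀ᶠ T : ℝ in atTop, ∃ (q : ℤ) (a : Fin d → ℤ),
    1 ≤ q ∧ (q : ℝ) ≤ T ∧ (∑ i, ((a i : ℚ) / (q : ℚ)) ^ 2) = 1 ∧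
    Real.sqrt (∑ i, (ξ i - (a i : ℝ) / (q : ℝ)) ^ 2)
      ≤ 1 / ((q : ℝ) ^ ((1 : ℝ) / 2) * T ^ (γ / 2))


lemma mink_forms {ι : Type} [Fintype ι] [DecidableEq ι] (A : Matrix ι ι ℝ) (hA : A.det ≠ 0)
    (c : ι → ℝ) (hc : ∀ i, 0 < c i) (h : |A.det| < ∏ i, c i) :
    ∃ z : ι → ℤ, z ≠ 0 ∧ ∀ i, |(A.mulVec (fun j => (z j : ℝ))) i| ≤ c i := by
  let b := Pi.basisFun ℝ ι
  have fund := ZSpan.isAddFundamentalDomain' b MeasureTheory.volume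
  have : Countable (Submodule.span ℤ (Set.range b)) := inferInstance
  have : Countable (Submodule.span ℤ (Set.range b)).toAddSubgroup := this
  have hs := MeasureTheory.exists_ne_zero_mem_lattice_of_measure_mul_two_pow_lt_measure
    (s := (Matrix.toLin' A) ⁻¹' (Set.Icc (-c) c)) fund ?_ ?_ ?_
  · obtain ⟨⟨x, hx⟩, hx0, hxs⟩ := hs
    have hx' : x ∈ Submodule.span ℤ (Set.range b) := hx
    have := (Module.Basis.mem_span_iff_repr_mem ℤ b x).1 hx'
    choose z hz using this
    have hzx : (fun j => (z j : ℝ)) = x := by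
      ext j; simpa [b] using hz j
    refine ⟨z, ?_, ?_⟩
    · rintro rfl
      apply hx0
      ext j
      simp [← hzx]
    · intro i
      rw [hzx]
      rw [abs_le]
      simp only [Set.mem_preimage, Matrix.toLin'_apply, Set.mem_Icc] at hxs
      exact ⟨hxs.1 i, hxs.2 i⟩
  · intro x hx
    simp only [Set.mem_preimage, map_neg, Set.mem_Icc] at hx ⊢
    exact ⟨neg_le_neg hx.2, by simpa using neg_le_neg hx.1⟩
  · exact (convex_Icc _ _).linear_preimage _
  · rw [ZSpan.volume_fundamentalDomain, MeasureTheory.Measure.addHaar_preimage_linearMap _ (by simpa using hA)]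
    rw [Real.volume_Icc_pi]
    have h1 : (Matrix.of b) = (1 : Matrix ι ι ℝ) := by
      ext i j; simp [b, Matrix.one_apply, Pi.single_apply, eq_comm]
    rw [h1]
    rw [← ENNReal.ofReal_prod_of_nonneg (by intro i _; simp; linarith [hc i]), ← ENNReal.ofReal_mul (by positivity)]
    simp only [LinearMap.det_toLin', Matrix.det_one, abs_one, ENNReal.ofReal_one, one_mul, Module.finrank_fintype_fun_eq_card, Pi.neg_apply]
    have h2 : ∏ i, (c i - - c i) = 2 ^ Fintype.card ι * ∏ i, c i := by
      simp_rw [sub_neg_eq_add, ← two_mul, Finset.prod_mul_distrib]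
      simp
    rw [h2, show (2:ENNReal) = ENNReal.ofReal 2 by simp, ← ENNReal.ofReal_pow (by norm_num)]
    have hd : 0 < |A.det| := abs_pos.2 hA
    have : (2:ℝ)^Fintype.card ι < |(A.det)⁻¹| * (2 ^ Fintype.card ι * ∏ i, c i) := by
      rw [abs_inv, inv_mul_eq_div, lt_div_iff₀ hd]
      exact mul_lt_mul_of_pos_left h (by positivity)
    rw [ENNReal.ofReal_lt_ofReal_iff (lt_trans (by positivity) this)]
    exact this

lemma dichot (ι : Type) [Fintype ι] [DecidableEq ι] (D c : ℝ) (hc : 0 < c) :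
    ∃ R : ℝ, 0 < R ∧ ∀ A : Matrix ι ι ℝ, A.det ≠ 0 → |A.det| ≤ D →
      (∃ z : ι → ℤ, z ≠ 0 ∧ ∀ i, |(A.mulVec (fun j => (z j : ℝ))) i| ≤ c) ∨
      (∃ Z : Matrix ι ι ℤ, Z.det ≠ 0 ∧
        ∀ k i, |(A.mulVec (fun j => (Z k j : ℝ))) i| ≤ R) := by
  obtain ⟨n, hn⟩ : ∃ n : ℝ, n = (Fintype.card ι : ℝ) := ⟨_, rfl⟩
  have hn0 : 0 ≤ n := by rw [hn]; positivity
  obtain ⟨e, he, hec⟩ : ∃ e : ℝ, 0 < e ∧ (n + 1) * e = c :=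
    ⟨c / (n + 1), by positivity, by field_simp⟩
  obtain ⟨H, hH, hHD⟩ : ∃ H : ℝ, 0 < H ∧ H * e ^ (Fintype.card ι - 1) = |D| + 1 :=
    ⟨(|D| + 1) / e ^ (Fintype.card ι - 1), by positivity, by field_simp⟩
  refine ⟨H + (n + 1) * e, by positivity, fun A hA hAD => ?_⟩
  set R := H + (n + 1) * e with hR
  let S : Set (ι → ℝ) := {x | (∃ z : ι → ℤ, x = fun j => (z j : ℝ)) ∧ ∀ i, |A.mulVec x i| ≤ R}
  by_cases hS : Submodule.span ℝ S = ⊤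
  · right
    let b := Module.Basis.ofSpan hS.ge
    let e := b.indexEquiv (Pi.basisFun ℝ ι)
    let b' := b.reindex e
    have hb' : ∀ i, b' i ∈ S := by
      intro i
      have : b' i ∈ Set.range b := by simp [b']
      apply Module.Basis.ofSpan_subset hS.ge this
    choose z hz using fun i => (hb' i).1
    refine ⟨Matrix.of z, ?_, ?_⟩
    · have h1 : LinearIndependent ℝ ((Matrix.of z).map (Int.cast : ℤ → ℝ)).row := by
        have : ((Matrix.of z).map (Int.cast : ℤ → ℝ)).row = b' := by
          ext i j; simp [hz i]
        rw [this]; exact b'.linearIndependent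
      rw [Matrix.linearIndependent_rows_iff_isUnit, Matrix.isUnit_iff_isUnit_det] at h1
      intro h0
      have := h1.ne_zero
      apply this
      have h2 := Int.cast_det (R := ℝ) (Matrix.of z)
      rw [h0] at h2
      simpa using h2.symm
    · intro k i
      have := (hb' k).2 i
      rw [hz k] at this
      simpa using this
  · left
    have hV : Submodule.map (Matrix.toLin' A) (Submodule.span ℝ S) < ⊤ := by
      rw [lt_top_iff_ne_top]
      intro h
      apply hS
      have hinj : Function.Injective (Matrix.toLin' A) := by
        have : IsUnit A := (Matrix.isUnit_iff_isUnit_det A).2 hA.isUnit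
        exact Matrix.mulVec_injective_of_isUnit this
      rw [← Submodule.comap_map_eq_of_injective hinj (Submodule.span ℝ S), h, Submodule.comap_top]
    obtain ⟨f, hf0, hf⟩ := Submodule.exists_le_ker_of_lt_top _ hV
    have hfS : ∀ x ∈ S, f (A.mulVec x) = 0 := fun x hx =>
      hf (Submodule.mem_map.2 ⟨x, Submodule.subset_span hx, by simp⟩)
    let φ : ι → ℝ := fun i => f (Pi.single i 1)
    have hfφ : ∀ y, f y = ∑ i, φ i * y i := by
      intro y
      rw [LinearMap.pi_apply_eq_sum_univ f y]
      apply Finset.sum_congr rfl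
      intro i _
      simp only [smul_eq_mul, φ]
      rw [mul_comm]
      congr 2
      ext j; simp [Pi.single_apply, eq_comm]
    have hφ0 : ∃ i, φ i ≠ 0 := by
      by_contra! h
      apply hf0
      ext i
      simpa using h i
    obtain ⟨i0, hi0⟩ := hφ0
    obtain ⟨j, -, hj⟩ := Finset.exists_max_image Finset.univ (fun i => |φ i|) ⟨i0, Finset.mem_univ _⟩
    have hj0 : φ j ≠ 0 := by
      intro h
      have := hj i0 (Finset.mem_univ _)
      simp [h] at this
      exact hi0 this
    let ψ : ι → ℝ := fun i => φ i / φ j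
    have hψj : ψ j = 1 := by simp [ψ, hj0]
    have hψ : ∀ i, |ψ i| ≤ 1 := by
      intro i
      simp only [ψ, abs_div]
      rw [div_le_one (abs_pos.2 hj0)]
      exact hj i (Finset.mem_univ _)
    have hψS : ∀ x ∈ S, ∑ i, ψ i * A.mulVec x i = 0 := by
      intro x hx
      have := hfS x hx
      rw [hfφ] at this
      simp only [ψ, div_mul_eq_mul_div]
      rw [← Finset.sum_div, this, zero_div]
    let A' := A.updateRow j (∑ k, ψ k • A k)
    have hdet : A'.det = A.det := by
      simp only [A']
      rw [Matrix.det_updateRow_sum, hψj, one_smul]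
    obtain ⟨z, hz0, hz⟩ := mink_forms A' (hdet ▸ hA) (Function.update (fun _ => e) j H)
      (by intro i; by_cases h : i = j
          · subst h; simpa using hH
          · simpa [h] using he)
      (by rw [hdet, Finset.prod_update_of_mem (Finset.mem_univ j)]
          simp only [Finset.prod_const, Finset.card_sdiff, Finset.card_univ]
          simp
          rw [hHD]
          linarith [le_abs_self D])
    refine ⟨z, hz0, ?_⟩
    set x : ι → ℝ := fun j => (z j : ℝ) with hx
    have hi : ∀ i, i ≠ j → |A.mulVec x i| ≤ e := by
      intro i hij
      have := hz i
      simp only [A', Function.update_of_ne hij] at this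
      simpa [Matrix.mulVec, Matrix.updateRow_ne hij] using this
    have hjj : |∑ i, ψ i * A.mulVec x i| ≤ H := by
      have := hz j
      simp only [A', Function.update_self, Matrix.mulVec, Matrix.updateRow_self] at this
      simp only [sum_dotProduct, smul_dotProduct] at this
      simpa [Matrix.mulVec] using this
    have hrest : |∑ i ∈ Finset.univ.erase j, ψ i * A.mulVec x i| ≤ n * e := by
      calc _ ≤ ∑ i ∈ Finset.univ.erase j, |ψ i * A.mulVec x i| := Finset.abs_sum_le_sum_abs _ _
        _ ≤ ∑ i ∈ Finset.univ.erase j, e := by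
          apply Finset.sum_le_sum
          intro i h
          rw [abs_mul]
          calc _ ≤ 1 * e := mul_le_mul (hψ i) (hi i (Finset.ne_of_mem_erase h)) (abs_nonneg _) (by norm_num)
            _ = e := one_mul e
        _ ≤ ∑ i : ι, e := Finset.sum_le_sum_of_subset_of_nonneg (Finset.erase_subset _ _) (fun _ _ _ => he.le)
        _ = n * e := by simp [hn]
    have hsplit : ∑ i, ψ i * A.mulVec x i = A.mulVec x j + ∑ i ∈ Finset.univ.erase j, ψ i * A.mulVec x i := by
      rw [← Finset.add_sum_erase _ _ (Finset.mem_univ j), hψj, one_mul]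
    have hne : 0 ≤ n * e := by positivity
    have hxS : x ∈ S := by
      refine ⟨⟨z, rfl⟩, fun i => ?_⟩
      by_cases h : i = j
      · subst h
        rw [hsplit] at hjj
        rw [abs_le] at *
        constructor <;> linarith [hjj.1, hjj.2, hrest.1, hrest.2]
      · have := hi i h
        linarith
    have h0 := hψS x hxS
    intro i
    by_cases h : i = j
    · subst h
      rw [hsplit] at h0
      rw [abs_le] at *
      constructor <;> linarith [hrest.1, hrest.2]
    · have := hi i h
      linarith

lemma gram_bound (ι : Type) [Fintype ι] [DecidableEq ι] (M : ℤ) :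
    ∃ P : ℝ, 0 < P ∧ ∀ G : Matrix ι ι ℤ, (∀ i j, |G i j| ≤ M) →
      (∃ m : ι → ℤ, m ≠ 0 ∧ m ⬝ᵥ G.mulVec m = 0) →
      ∃ m : ι → ℤ, m ≠ 0 ∧ m ⬝ᵥ G.mulVec m = 0 ∧ ∀ i, |(m i : ℝ)| ≤ P := by
  have h1 : ∀ G : ι → ι → ℤ, ∃ p : ℝ, (∃ m : ι → ℤ, m ≠ 0 ∧ m ⬝ᵥ (Matrix.of G).mulVec m = 0) →
      ∃ m : ι → ℤ, m ≠ 0 ∧ m ⬝ᵥ (Matrix.of G).mulVec m = 0 ∧ ∀ i, |(m i : ℝ)| ≤ p := by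
    intro G
    by_cases h : ∃ m : ι → ℤ, m ≠ 0 ∧ m ⬝ᵥ (Matrix.of G).mulVec m = 0
    · obtain ⟨m, hm0, hm⟩ := h
      refine ⟨∑ i, |(m i : ℝ)|, fun _ => ⟨m, hm0, hm, fun i => ?_⟩⟩
      exact Finset.single_le_sum (f := fun i => |(m i : ℝ)|) (fun _ _ => abs_nonneg _) (Finset.mem_univ i)
    · exact ⟨0, fun h' => absurd h' h⟩
  choose p hp using h1
  have hfin : (Set.Icc (fun _ _ => -M) (fun _ _ => M) : Set (ι → ι → ℤ)).Finite := Set.finite_Icc _ _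
  obtain ⟨P, hP⟩ := (hfin.image p).bddAbove
  refine ⟨max P 1, by positivity, fun G hG hex => ?_⟩
  obtain ⟨m, h0, h1, h2⟩ := hp G hex
  refine ⟨m, h0, h1, fun i => (h2 i).trans (le_max_of_le_left ?_)⟩
  apply hP
  refine ⟨G, ⟨fun i j => (abs_le.1 (hG i j)).1, fun i j => (abs_le.1 (hG i j)).2⟩, rfl⟩

lemma isotropic_bound (ι : Type) [Fintype ι] [DecidableEq ι] (J : Matrix ι ι ℤ)
    (v : ι → ℤ) (hv0 : v ≠ 0) (hv : v ⬝ᵥ J.mulVec v = 0) (D K : ℝ) (hK : 0 < K) :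
    ∃ C : ℝ, 0 < C ∧ ∀ A : Matrix ι ι ℝ, A.det ≠ 0 → |A.det| ≤ D →
      (∀ R : ℝ, 0 < R → ∀ x y : ι → ℤ, (∀ i, |A.mulVec (fun j => (x j : ℝ)) i| ≤ R) →
        (∀ i, |A.mulVec (fun j => (y j : ℝ)) i| ≤ R) →
        |((x ⬝ᵥ J.mulVec y : ℤ) : ℝ)| ≤ K * R ^ 2) →
      ∃ x : ι → ℤ, x ≠ 0 ∧ x ⬝ᵥ J.mulVec x = 0 ∧
        ∀ i, |A.mulVec (fun j => (x j : ℝ)) i| ≤ C := by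
  obtain ⟨c, hc, hcK⟩ : ∃ c : ℝ, 0 < c ∧ K * c ^ 2 < 1 := by
    refine ⟨1 / (K + 1), by positivity, ?_⟩
    rw [div_pow, one_pow, mul_one_div, div_lt_one (by positivity)]
    nlinarith
  obtain ⟨R, hR, hdi⟩ := dichot ι D c hc
  obtain ⟨P, hP, hgr⟩ := gram_bound ι ⌈K * R ^ 2⌉
  refine ⟨c + (Fintype.card ι : ℝ) * (P * R), by positivity, fun A hA hAD hJ => ?_⟩
  have hpos : 0 ≤ (Fintype.card ι : ℝ) * (P * R) := by positivity
  rcases hdi A hA hAD with ⟨z, hz0, hz⟩ | ⟨Z, hZ0, hZ⟩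
  · refine ⟨z, hz0, ?_, fun i => (hz i).trans (by linarith)⟩
    have h1 := (hJ c hc z z hz hz).trans_lt hcK
    have h2 : |z ⬝ᵥ J.mulVec z| < 1 := by exact_mod_cast h1
    exact Int.abs_lt_one_iff.1 h2
  · have hG : ∀ m : ι → ℤ, m ⬝ᵥ (Z * J * Z.transpose).mulVec m
        = (Matrix.vecMul m Z) ⬝ᵥ J.mulVec (Matrix.vecMul m Z) := by
      intro m
      rw [← Matrix.mulVec_mulVec, ← Matrix.mulVec_mulVec, Matrix.mulVec_transpose,
        Matrix.dotProduct_mulVec]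
    obtain ⟨m, hm0, hm, hmP⟩ := hgr (Z * J * Z.transpose) (by
      intro i j
      have h1 := hJ R hR (Z i) (Z j) (hZ i) (hZ j)
      have h2 : (Z * J * Z.transpose) i j = Z i ⬝ᵥ J.mulVec (Z j) := by
        rw [Matrix.dotProduct_mulVec]
        rfl
      rw [h2]
      have h3 := h1.trans (Int.le_ceil _)
      exact_mod_cast h3) (by
      refine ⟨Matrix.vecMul v Z.adjugate, ?_, ?_⟩
      · intro h
        have h1 : Matrix.vecMul (Matrix.vecMul v Z.adjugate) Z = 0 := by rw [h]; simp
        rw [Matrix.vecMul_vecMul, Matrix.adjugate_mul, Matrix.vecMul_smul, Matrix.vecMul_one] at h1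
        rcases smul_eq_zero.1 h1 with h | h
        · exact hZ0 h
        · exact hv0 h
      · rw [hG, Matrix.vecMul_vecMul, Matrix.adjugate_mul, Matrix.vecMul_smul, Matrix.vecMul_one,
          Matrix.mulVec_smul, smul_dotProduct, dotProduct_smul, hv]
        simp)
    rw [hG] at hm
    refine ⟨Matrix.vecMul m Z, ?_, hm, fun i => ?_⟩
    · intro h
      exact hZ0 (Matrix.exists_vecMul_eq_zero_iff.1 ⟨m, hm0, h⟩)
    · have h1 : (fun j => ((Matrix.vecMul m Z j : ℤ) : ℝ)) = ∑ k, (m k : ℝ) • (fun j => (Z k j : ℝ)) := by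
        ext j
        simp [Matrix.vecMul, dotProduct]
      rw [h1, Matrix.mulVec_sum]
      simp only [Matrix.mulVec_smul, Finset.sum_apply, Pi.smul_apply, smul_eq_mul]
      calc _ ≤ ∑ k, |(m k : ℝ) * A.mulVec (fun j => (Z k j : ℝ)) i| := Finset.abs_sum_le_sum_abs _ _
        _ ≤ ∑ k : ι, P * R := by
          apply Finset.sum_le_sum
          intro k _
          rw [abs_mul]
          exact mul_le_mul (hmP k) (hZ k i) (abs_nonneg _) hP.le
        _ = (Fintype.card ι : ℝ) * (P * R) := by simp
        _ ≤ _ := by linarith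

lemma sphere_isotropic (d : ℕ) (ξ : Fin d → ℝ) (hsphere : ∑ i, ξ i ^ 2 = 1) :
    ∃ C : ℝ, 0 < C ∧ ∀ T : ℝ, 0 < T → ∃ (q : ℤ) (a : Fin d → ℤ),
      1 ≤ q ∧ ∑ i, a i ^ 2 = q ^ 2 ∧ (q : ℝ) - ∑ i, ξ i * a i ≤ C / T ∧
      (q : ℝ) + ∑ i, ξ i * a i ≤ C * T := by
  obtain ⟨k, hk⟩ : ∃ k, ξ k ≠ 0 := by
    by_contra! h
    simp [h] at hsphere
  have hξ1 : ∀ i, |ξ i| ≤ 1 := by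
    intro i
    have := Finset.single_le_sum (f := fun i => ξ i ^ 2) (fun _ _ => sq_nonneg _) (Finset.mem_univ i)
    simp only [hsphere] at this
    exact (sq_le_one_iff_abs_le_one _).1 this
  let J : Matrix (Option (Fin d)) (Option (Fin d)) ℤ :=
    Matrix.diagonal (fun o => o.elim 1 (fun _ => -1))
  have hJ : ∀ x y : Option (Fin d) → ℤ,
      x ⬝ᵥ J.mulVec y = x none * y none - ∑ i, x (some i) * y (some i) := by
    intro x y
    simp only [J, dotProduct, Matrix.mulVec_diagonal, Fintype.sum_option]
    simp [Finset.sum_neg_distrib, sub_eq_add_neg]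
  let v : Option (Fin d) → ℤ := fun o => o.elim 1 (fun i => if i = k then 1 else 0)
  have hv0 : v ≠ 0 := by
    intro h
    have := congrFun h none
    simp [v] at this
  have hv : v ⬝ᵥ J.mulVec v = 0 := by
    rw [hJ]; simp [v]
  let B : Matrix (Option (Fin d)) (Option (Fin d)) ℝ := Matrix.of fun o p =>
    o.elim (p.elim 1 (fun j => - ξ j))
      (fun i => if i = k then p.elim 1 ξ
        else p.elim 0 (fun j => (if j = i then 1 else 0) - ξ i * ξ j))
  have hBn : ∀ x : Option (Fin d) → ℝ, B.mulVec x none = x none - ∑ i, ξ i * x (some i) := by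
    intro x
    simp [B, Matrix.mulVec, dotProduct, Fintype.sum_option, sub_eq_add_neg]
  have hBk : ∀ x : Option (Fin d) → ℝ, B.mulVec x (some k) = x none + ∑ i, ξ i * x (some i) := by
    intro x
    simp [B, Matrix.mulVec, dotProduct, Fintype.sum_option]
  have hBi : ∀ x : Option (Fin d) → ℝ, ∀ i, i ≠ k →
      B.mulVec x (some i) = x (some i) - ξ i * ∑ j, ξ j * x (some j) := by
    intro x i hi
    simp [B, Matrix.mulVec, dotProduct, Fintype.sum_option, hi, sub_mul, Finset.mul_sum, mul_assoc]
  have hBdet : B.det ≠ 0 := by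
    intro h
    obtain ⟨x, hx0, hx⟩ := Matrix.exists_mulVec_eq_zero_iff.2 h
    have h1 := congrFun hx none
    have h2 := congrFun hx (some k)
    rw [hBn, Pi.zero_apply] at h1
    rw [hBk, Pi.zero_apply] at h2
    have hs : ∑ i, ξ i * x (some i) = 0 := by linarith
    have hq : x none = 0 := by linarith
    have hi : ∀ i, i ≠ k → x (some i) = 0 := by
      intro i hik
      have := congrFun hx (some i)
      rw [hBi x i hik, hs] at this
      simpa using this
    have hkk : x (some k) = 0 := by
      rw [Finset.sum_eq_single k (fun i _ hik => by rw [hi i hik, mul_zero]) (by simp)] at hs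
      exact (mul_eq_zero.1 hs).resolve_left hk
    apply hx0
    ext o
    rcases o with _ | i
    · exact hq
    · by_cases hik : i = k
      · subst hik; exact hkk
      · exact hi i hik
  obtain ⟨L, hL⟩ : ∃ L : ℝ, L = 1 + d / |ξ k| := ⟨_, rfl⟩
  have hk' : 0 < |ξ k| := abs_pos.2 hk
  have hL1 : 1 ≤ L := by rw [hL]; linarith [show 0 ≤ (d : ℝ) / |ξ k| by positivity]
  have hLk : (d : ℝ) ≤ L * |ξ k| := by
    rw [hL, add_mul, div_mul_cancel₀ _ hk'.ne']; linarith
  obtain ⟨C, hC, hmain⟩ := isotropic_bound (Option (Fin d)) J v hv0 hv |B.det| (1 + d * L ^ 2)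
    (by positivity)
  refine ⟨C, hC, fun T hT => ?_⟩
  let s : Option (Fin d) → ℝ := fun o => o.elim T (fun i => if i = k then T⁻¹ else 1)
  let A := Matrix.diagonal s * B
  have hA : ∀ x o, A.mulVec x o = s o * B.mulVec x o := by
    intro x o
    simp only [A]
    rw [← Matrix.mulVec_mulVec, Matrix.mulVec_diagonal]
  have hAdet : A.det = B.det := by
    simp only [A]
    rw [Matrix.det_mul, Matrix.det_diagonal, Fintype.prod_option]
    simp [s, hT.ne']
  have hAn : ∀ x, A.mulVec x none = T * (x none - ∑ i, ξ i * x (some i)) := by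
    intro x; rw [hA, hBn]; simp [s]
  have hAk : ∀ x, A.mulVec x (some k) = T⁻¹ * (x none + ∑ i, ξ i * x (some i)) := by
    intro x; rw [hA, hBk]; simp [s]
  have hAi : ∀ x i, i ≠ k → A.mulVec x (some i) = x (some i) - ξ i * ∑ j, ξ j * x (some j) := by
    intro x i hik; rw [hA, hBi x i hik]; simp [s, hik]
  have hw : ∀ (R : ℝ), 0 < R → ∀ x : Option (Fin d) → ℝ, (∀ o, |A.mulVec x o| ≤ R) →
      ∀ i, |x (some i) - ξ i * ∑ j, ξ j * x (some j)| ≤ L * R := by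
    intro R hR x hx
    have hi : ∀ i, i ≠ k → |x (some i) - ξ i * ∑ j, ξ j * x (some j)| ≤ R := by
      intro i hik
      rw [← hAi x i hik]; exact hx _
    intro i
    by_cases hik : i = k
    · subst hik
      have hz : ∑ l, ξ l * (x (some l) - ξ l * ∑ j, ξ j * x (some j)) = 0 := by
        simp only [mul_sub, Finset.sum_sub_distrib, ← mul_assoc]
        rw [← Finset.sum_mul]
        simp only [← sq, hsphere]
        ring
      rw [← Finset.add_sum_erase _ _ (Finset.mem_univ i)] at hz
      have h1 : |∑ l ∈ Finset.univ.erase i, ξ l * (x (some l) - ξ l * ∑ j, ξ j * x (some j))| ≤ d * R := by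
        calc _ ≤ ∑ l ∈ Finset.univ.erase i, |ξ l * (x (some l) - ξ l * ∑ j, ξ j * x (some j))| :=
              Finset.abs_sum_le_sum_abs _ _
          _ ≤ ∑ l ∈ Finset.univ.erase i, R := by
            apply Finset.sum_le_sum
            intro l hl
            rw [abs_mul]
            calc _ ≤ 1 * R := mul_le_mul (hξ1 l) (hi l (Finset.ne_of_mem_erase hl)) (abs_nonneg _) (by norm_num)
              _ = R := one_mul R
          _ ≤ ∑ l : Fin d, R := Finset.sum_le_sum_of_subset_of_nonneg (Finset.erase_subset _ _) (fun _ _ _ => hR.le)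
          _ = d * R := by simp
      have h2 : |ξ i| * |x (some i) - ξ i * ∑ j, ξ j * x (some j)| ≤ d * R := by
        rw [← abs_mul, eq_neg_of_add_eq_zero_left hz, abs_neg]; exact h1
      have h3 : (d : ℝ) * R ≤ |ξ i| * (L * R) := by nlinarith
      exact le_of_mul_le_mul_left (h2.trans h3) hk'
    · have := hi i hik
      nlinarith
  obtain ⟨x, hx0, hx, hxC⟩ := hmain A (hAdet ▸ hBdet) (by rw [hAdet]) (by
    intro R hR x y hx hy
    rw [hJ]
    push_cast
    have hwx := hw R hR _ hx
    have hwy := hw R hR _ hy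
    have hxn := hx none
    have hyn := hy none
    have hxk := hx (some k)
    have hyk := hy (some k)
    rw [hAn] at hxn hyn
    rw [hAk] at hxk hyk
    obtain ⟨sx, hsx⟩ : ∃ t, t = ∑ i, ξ i * (x (some i) : ℝ) := ⟨_, rfl⟩
    obtain ⟨sy, hsy⟩ : ∃ t, t = ∑ i, ξ i * (y (some i) : ℝ) := ⟨_, rfl⟩
    simp only [← hsx, ← hsy] at hwx hwy hxn hyn hxk hyk
    have hww : ∑ i, ((x (some i) : ℝ) - ξ i * sx) * ((y (some i) : ℝ) - ξ i * sy)
        = ∑ i, (x (some i) : ℝ) * (y (some i) : ℝ) - sx * sy := by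
      have : ∀ i, ((x (some i) : ℝ) - ξ i * sx) * ((y (some i) : ℝ) - ξ i * sy)
        = (x (some i) : ℝ) * (y (some i) : ℝ) - sy * (ξ i * x (some i)) - sx * (ξ i * y (some i))
          + sx * sy * ξ i ^ 2 := by intro i; ring
      simp only [this, Finset.sum_add_distrib, Finset.sum_sub_distrib, ← Finset.mul_sum, hsphere,
        ← hsx, ← hsy]
      ring
    have hid : (x none : ℝ) * y none - ∑ i, (x (some i) : ℝ) * (y (some i) : ℝ)
        = ((T * (x none - sx)) * (T⁻¹ * (y none + sy)) + (T * (y none - sy)) * (T⁻¹ * (x none + sx))) / 2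
          - ∑ i, ((x (some i) : ℝ) - ξ i * sx) * ((y (some i) : ℝ) - ξ i * sy) := by
      rw [hww]
      field_simp
      ring
    rw [hid]
    have b1 : |(T * (x none - sx)) * (T⁻¹ * (y none + sy))| ≤ R * R := by
      rw [abs_mul]; exact mul_le_mul hxn hyk (abs_nonneg _) hR.le
    have b2 : |(T * (y none - sy)) * (T⁻¹ * (x none + sx))| ≤ R * R := by
      rw [abs_mul]; exact mul_le_mul hyn hxk (abs_nonneg _) hR.le
    have b3 : |∑ i, ((x (some i) : ℝ) - ξ i * sx) * ((y (some i) : ℝ) - ξ i * sy)|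
        ≤ d * ((L * R) * (L * R)) := by
      calc _ ≤ ∑ i, |((x (some i) : ℝ) - ξ i * sx) * ((y (some i) : ℝ) - ξ i * sy)| :=
            Finset.abs_sum_le_sum_abs _ _
        _ ≤ ∑ i : Fin d, ((L * R) * (L * R)) := by
          apply Finset.sum_le_sum
          intro i _
          rw [abs_mul]
          exact mul_le_mul (hwx i) (hwy i) (abs_nonneg _) (by positivity)
        _ = _ := by simp
    have hfin : (1 + d * L ^ 2) * R ^ 2 = R * R + d * ((L * R) * (L * R)) := by ring
    rw [hfin]
    rw [abs_le] at b1 b2 b3 ⊢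
    constructor <;> linarith [b1.1, b1.2, b2.1, b2.2, b3.1, b3.2])
  rw [hJ] at hx
  have hxn := hxC none
  have hxk := hxC (some k)
  rw [hAn, abs_mul, abs_of_pos hT] at hxn
  rw [hAk, abs_mul, abs_of_pos (inv_pos.2 hT)] at hxk
  have hu : |(x none : ℝ) - ∑ i, ξ i * (x (some i) : ℝ)| ≤ C / T := by
    rw [le_div_iff₀ hT]; linarith
  have hv' : |(x none : ℝ) + ∑ i, ξ i * (x (some i) : ℝ)| ≤ C * T := by
    rw [inv_mul_le_iff₀ hT] at hxk; linarith
  have hsum : ∑ i, x (some i) ^ 2 = x none ^ 2 := by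
    simp only [sq]; linarith
  have hq0 : x none ≠ 0 := by
    intro h
    rw [h] at hsum
    apply hx0
    ext o
    rcases o with _ | i
    · exact h
    · have := (Finset.sum_eq_zero_iff_of_nonneg (fun i _ => sq_nonneg (x (some i)))).1 (by simpa using hsum) i (Finset.mem_univ i)
      simpa using this
  rw [abs_le] at hu hv'
  rcases lt_or_gt_of_ne hq0 with h | h
  · refine ⟨- x none, fun i => - x (some i), by omega, by simpa using hsum, ?_, ?_⟩
    · push_cast
      simp only [mul_neg, Finset.sum_neg_distrib]
      linarith [hu.1]
    · push_cast
      simp only [mul_neg, Finset.sum_neg_distrib]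
      linarith [hv'.1]
  · exact ⟨x none, fun i => x (some i), by omega, hsum, hu.2, hv'.2⟩

lemma dist_sq (d : ℕ) (ξ : Fin d → ℝ) (hsphere : ∑ i, ξ i ^ 2 = 1) (q : ℝ) (hq : 0 < q)
    (a : Fin d → ℝ) (ha : ∑ i, a i ^ 2 = q ^ 2) :
    ∑ i, (ξ i - a i / q) ^ 2 = 2 * (q - ∑ i, ξ i * a i) / q := by
  have : ∀ i, (ξ i - a i / q) ^ 2 = ξ i ^ 2 - 2 / q * (ξ i * a i) + (1 / q ^ 2) * a i ^ 2 := by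
    intro i; field_simp; ring
  simp only [this, Finset.sum_add_distrib, Finset.sum_sub_distrib, ← Finset.mul_sum, ha, hsphere]
  field_simp
  ring

lemma int_of_rat (d : ℕ) (q : ℤ) (hq : 1 ≤ q) (a : Fin d → ℤ) :
    (∑ i, ((a i : ℚ) / (q : ℚ)) ^ 2) = 1 ↔ ∑ i, a i ^ 2 = q ^ 2 := by
  have hq' : (q : ℚ) ≠ 0 := by
    have : q ≠ 0 := by omega
    exact_mod_cast this
  simp only [div_pow]
  rw [← Finset.sum_div, div_eq_one_iff_eq (pow_ne_zero 2 hq')]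
  exact_mod_cast Iff.rfl

lemma approx_sq (X q T γ : ℝ) (hq : 0 < q) (hT : 0 < T) :
    Real.sqrt X ≤ 1 / (q ^ ((1 : ℝ) / 2) * T ^ (γ / 2)) ↔ X ≤ 1 / (q * T ^ γ) := by
  rw [Real.sqrt_le_left (by positivity)]
  have h1 : (q ^ ((1 : ℝ) / 2)) ^ 2 = q := by
    rw [← Real.rpow_natCast, ← Real.rpow_mul hq.le]; norm_num
  have h2 : (T ^ (γ / 2)) ^ 2 = T ^ γ := by
    rw [← Real.rpow_natCast, ← Real.rpow_mul hT.le]; norm_num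
  rw [div_pow, mul_pow, h1, h2, one_pow]

lemma lower_part (d : ℕ) (ξ : Fin d → ℝ) (hsphere : ∑ i, ξ i ^ 2 = 1) (γ : ℝ) (hγ : γ < 1) :
    IntrinsicUnifApprox ξ γ := by
  obtain ⟨C, hC, hmain⟩ := sphere_isotropic d ξ hsphere
  have hlim : Tendsto (fun T : ℝ => T ^ (1 - γ)) atTop atTop := tendsto_rpow_atTop (by linarith)
  filter_upwards [hlim.eventually_ge_atTop (2 * C ^ 2), eventually_ge_atTop C] with T hT1 hT2
  have hT : 0 < T := lt_of_lt_of_le hC hT2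
  obtain ⟨q, a, hq, ha, hu, hv⟩ := hmain (T / C) (by positivity)
  have hqr : (1 : ℝ) ≤ q := by exact_mod_cast hq
  have hq0 : (0 : ℝ) < q := by linarith
  have h1 : C / (T / C) = C ^ 2 / T := by field_simp
  have h2 : C * (T / C) = T := by field_simp
  rw [h1] at hu
  rw [h2] at hv
  have ha' : ∑ i, (a i : ℝ) ^ 2 = (q : ℝ) ^ 2 := by exact_mod_cast ha
  refine ⟨q, a, hq, ?_, (int_of_rat d q hq a).2 ha, ?_⟩
  · have : C ^ 2 / T ≤ T := by rw [div_le_iff₀ hT]; nlinarith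
    linarith
  · rw [approx_sq _ _ _ _ hq0 hT, dist_sq d ξ hsphere q hq0 (fun i => (a i : ℝ)) ha']
    have hTg : 0 < T ^ γ := Real.rpow_pos_of_pos hT γ
    have hTT : T ^ (1 - γ) * T ^ γ = T := by
      rw [← Real.rpow_add hT]; simp
    calc 2 * ((q : ℝ) - ∑ i, ξ i * (a i : ℝ)) / q ≤ 2 * (C ^ 2 / T) / q := by gcongr
      _ ≤ 1 / (q * T ^ γ) := by
        rw [← mul_div_assoc, div_div, div_le_div_iff₀ (by positivity) (by positivity)]
        have : 2 * C ^ 2 * T ^ γ ≤ T := by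
          calc _ ≤ T ^ (1 - γ) * T ^ γ := by gcongr
            _ = T := hTT
        nlinarith

lemma separation (d : ℕ) (q p : ℤ) (a b : Fin d → ℤ) (hq : 1 ≤ q) (hp : 1 ≤ p)
    (ha : ∑ i, a i ^ 2 = q ^ 2) (hb : ∑ i, b i ^ 2 = p ^ 2)
    (h : ∑ i, ((b i : ℝ) / p - (a i : ℝ) / q) ^ 2 < 2 / (q * p)) :
    ∀ i, (b i : ℝ) / p = (a i : ℝ) / q := by
  have hq0 : (0 : ℝ) < q := by exact_mod_cast (by omega : 0 < q)
  have hp0 : (0 : ℝ) < p := by exact_mod_cast (by omega : 0 < p)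
  have ha' : ∑ i, (a i : ℝ) ^ 2 = (q : ℝ) ^ 2 := by exact_mod_cast ha
  have hb' : ∑ i, (b i : ℝ) ^ 2 = (p : ℝ) ^ 2 := by exact_mod_cast hb
  have hnn : 0 ≤ ∑ i, ((b i : ℝ) / p - (a i : ℝ) / q) ^ 2 := Finset.sum_nonneg (fun _ _ => sq_nonneg _)
  have hds := dist_sq d (fun i => (b i : ℝ) / p) (by
    simp only [div_pow]
    rw [← Finset.sum_div, hb']; field_simp) q hq0 (fun i => (a i : ℝ)) ha'
  have hN : ∑ i, ((b i : ℝ) / p - (a i : ℝ) / q) ^ 2 = 2 * ((q * p - ∑ i, b i * a i : ℤ) : ℝ) / (q * p) := by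
    rw [hds]
    simp only [div_mul_eq_mul_div]
    rw [← Finset.sum_div]
    push_cast
    field_simp
  rw [hN, div_lt_div_iff_of_pos_right (by positivity)] at h
  have h1 : ((q * p - ∑ i, b i * a i : ℤ) : ℝ) < 1 := by linarith
  have h2 : (q * p - ∑ i, b i * a i : ℤ) < 1 := by exact_mod_cast h1
  have h3 : ∑ i, ((b i : ℝ) / p - (a i : ℝ) / q) ^ 2 = 0 := by
    apply le_antisymm _ hnn
    rw [hN]
    have : ((q * p - ∑ i, b i * a i : ℤ) : ℝ) ≤ 0 := by exact_mod_cast (by omega : (q * p - ∑ i, b i * a i : ℤ) ≤ 0)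
    apply div_nonpos_of_nonpos_of_nonneg
    · linarith
    · positivity
  intro i
  have := (Finset.sum_eq_zero_iff_of_nonneg (fun i _ => sq_nonneg _)).1 h3 i (Finset.mem_univ i)
  exact sub_eq_zero.1 (pow_eq_zero_iff (two_ne_zero)|>.1 this)

lemma upper_part (d : ℕ) (ξ : Fin d → ℝ) (hirr : ¬ ∃ x : Fin d → ℚ, (fun i => (x i : ℝ)) = ξ)
    (γ : ℝ) (h : IntrinsicUnifApprox ξ γ) : γ ≤ 1 := by
  by_contra! hγ
  have hγ0 : 0 < γ := by linarith
  have hlim : Tendsto (fun T : ℝ => T ^ (γ - 1)) atTop atTop := tendsto_rpow_atTop (by linarith)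
  obtain ⟨T0, hT0⟩ := eventually_atTop.1 h
  obtain ⟨T, hT1, hTT0, hTone⟩ := ((hlim.eventually_gt_atTop 4).and
    ((eventually_ge_atTop T0).and (eventually_ge_atTop 1))).exists
  have hT : 0 < T := by linarith
  classical
  have hex : ∃ n : ℕ, ∃ a : Fin d → ℤ, 1 ≤ n ∧ (n : ℝ) ≤ T ∧ ∑ i, a i ^ 2 = (n : ℤ) ^ 2 ∧
      ∑ i, (ξ i - (a i : ℝ) / n) ^ 2 ≤ 1 / (n * T ^ γ) := by
    obtain ⟨q, a, hq, hqT, ha, hd⟩ := hT0 T hTT0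
    lift q to ℕ using by omega
    have hq0 : (0 : ℝ) < (q : ℤ) := by exact_mod_cast (by omega : (0 : ℤ) < q)
    rw [approx_sq _ _ _ _ hq0 hT] at hd
    rw [int_of_rat d _ hq] at ha
    exact ⟨q, a, by exact_mod_cast hq, by exact_mod_cast hqT, ha, by exact_mod_cast hd⟩
  obtain ⟨q, hqdef⟩ : ∃ q, q = Nat.find hex := ⟨_, rfl⟩
  obtain ⟨a, hq, hqT, ha, hd⟩ := Nat.find_spec hex
  have hmin : ∀ m, m < q → _ := fun m hm => Nat.find_min hex (hqdef ▸ hm)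
  rw [← hqdef] at hq hqT ha hd
  have hq0 : (0 : ℝ) < q := by exact_mod_cast hq
  obtain ⟨X, hX⟩ : ∃ X, X = ∑ i, (ξ i - (a i : ℝ) / q) ^ 2 := ⟨_, rfl⟩
  rw [← hX] at hd
  have hX0 : 0 < X := by
    have hnn : 0 ≤ X := hX ▸ Finset.sum_nonneg (fun _ _ => sq_nonneg _)
    apply lt_of_le_of_ne hnn
    intro h0
    apply hirr
    refine ⟨fun i => (a i : ℚ) / q, ?_⟩
    ext i
    rw [hX] at h0
    have := (Finset.sum_eq_zero_iff_of_nonneg (fun i _ => sq_nonneg _)).1 h0.symm i (Finset.mem_univ i)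
    have := sub_eq_zero.1 (pow_eq_zero_iff (two_ne_zero)|>.1 this)
    push_cast
    exact this.symm
  obtain ⟨U, hU0, hU⟩ : ∃ U : ℝ, 0 < U ∧ U ^ γ = 1 / (X * q) := by
    refine ⟨(1 / (X * q)) ^ (1 / γ), by positivity, ?_⟩
    rw [← Real.rpow_mul (by positivity), one_div_mul_cancel hγ0.ne', Real.rpow_one]
  have hTg : 0 < T ^ γ := Real.rpow_pos_of_pos hT γ
  have hTU : T ≤ U := by
    rw [← Real.rpow_le_rpow_iff hT.le hU0.le hγ0, hU, le_div_iff₀ (by positivity)]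
    rw [le_div_iff₀ (by positivity)] at hd
    linarith
  obtain ⟨S, hS⟩ : ∃ S, S = 2 * U := ⟨_, rfl⟩
  have hS0 : 0 < S := by linarith
  have hUS : U ^ γ < S ^ γ := Real.rpow_lt_rpow hU0.le (by linarith) hγ0
  have hUg : 0 < U ^ γ := Real.rpow_pos_of_pos hU0 γ
  have hSg : 0 < S ^ γ := Real.rpow_pos_of_pos hS0 γ
  have hXU : X = 1 / (q * U ^ γ) := by rw [hU]; field_simp
  obtain ⟨p, b, hp, hpS, hb, hdb⟩ := hT0 S (by linarith)
  lift p to ℕ using by omega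
  have hp0 : (0 : ℝ) < (p : ℤ) := by exact_mod_cast (by omega : (0 : ℤ) < p)
  rw [approx_sq _ _ _ _ hp0 hS0] at hdb
  rw [int_of_rat d _ hp] at hb
  have hsep : ∀ i, (b i : ℝ) / (p : ℤ) = (a i : ℝ) / (q : ℤ) := by
    apply separation d q p a b (by exact_mod_cast hq) hp ha hb
    calc ∑ i, ((b i : ℝ) / (p : ℤ) - (a i : ℝ) / (q : ℤ)) ^ 2
        ≤ ∑ i, (2 * (ξ i - (a i : ℝ) / q) ^ 2 + 2 * (ξ i - (b i : ℝ) / (p : ℤ)) ^ 2) := by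
          apply Finset.sum_le_sum
          intro i _
          push_cast
          nlinarith [sq_nonneg ((ξ i - (a i : ℝ) / q) + (ξ i - (b i : ℝ) / p))]
      _ = 2 * X + 2 * ∑ i, (ξ i - (b i : ℝ) / (p : ℤ)) ^ 2 := by
          rw [Finset.sum_add_distrib, ← Finset.mul_sum, ← Finset.mul_sum, hX]
      _ ≤ 2 * (1 / (q * U ^ γ)) + 2 * (1 / ((p : ℤ) * S ^ γ)) := by
          rw [← hXU]; linarith
      _ ≤ 2 * (1 / (q * U ^ γ)) + 2 * (1 / ((p : ℤ) * U ^ γ)) := by gcongr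
      _ = 2 * (p + q) / (q * p * U ^ γ) := by push_cast at hp0 ⊢; field_simp
      _ < 2 / (((q : ℤ) : ℝ) * ((p : ℤ) : ℝ)) := by
          push_cast at hp0 hpS ⊢
          rw [div_lt_div_iff₀ (by positivity) (by positivity)]
          have h4 : 4 < U ^ (γ - 1) := lt_of_lt_of_le hT1 (Real.rpow_le_rpow hT.le hTU (by linarith))
          have h5 : U ^ γ = U ^ (γ - 1) * U := by
            rw [← Real.rpow_add_one hU0.ne']; simp
          have h6 : (p : ℝ) + q < U ^ γ := by rw [h5]; nlinarith
          have h7 : 0 < (q : ℝ) * p := by positivity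
          nlinarith
  have hXp : X ≤ 1 / ((p : ℝ) * S ^ γ) := by
    have : X = ∑ i, (ξ i - (b i : ℝ) / (p : ℤ)) ^ 2 := by
      rw [hX]; simp only [hsep]; push_cast; rfl
    rw [this]; exact_mod_cast hdb
  push_cast at hp0 hsep
  have hqp : q ≤ p := by
    by_contra! hlt
    apply hmin p hlt
    refine ⟨b, by exact_mod_cast hp, ?_, hb, ?_⟩
    · have : (p : ℝ) < q := by exact_mod_cast hlt
      linarith
    · simp only [hsep]
      rw [← hX]
      refine hd.trans ?_
      have : (p : ℝ) ≤ q := by exact_mod_cast hlt.le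
      gcongr
  have hqp' : (q : ℝ) ≤ p := by exact_mod_cast hqp
  have : X < X := by
    calc X ≤ 1 / ((p : ℝ) * S ^ γ) := hXp
      _ ≤ 1 / ((q : ℝ) * S ^ γ) := by gcongr
      _ < 1 / ((q : ℝ) * U ^ γ) := by gcongr
      _ = X := hXU.symm
  exact lt_irrefl _ this

/-- Theorem 4: for `d ≥ 2` and irrational `ξ` on the unit sphere, the uniform intrinsic
Diophantine exponent equals `1`: every exponent `γ` with the uniform intrinsic
approximation property satisfies `γ ≤ 1`, and every `γ < 1` has this property. -/
theorem intrinsic_uniform_exponent_eq_one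
    (d : ℕ) (hd : 2 ≤ d) (ξ : Fin d → ℝ)
    (hirr : ¬ ∃ x : Fin d → ℚ, (fun i => (x i : ℝ)) = ξ)
    (hsphere : ∑ i, ξ i ^ 2 = 1) :
    (∀ γ : ℝ, IntrinsicUnifApprox ξ γ → γ ≤ 1) ∧
    (∀ γ : ℝ, γ < 1 → IntrinsicUnifApprox ξ γ) := by
  exact ⟨fun γ h => upper_part d ξ hirr γ h, fun γ hγ => lower_part d ξ hsphere γ hγ⟩
end

section
/- Let f be an arbitrary polynomial of degree s ≥ 2 in d variables with rational coefficients such that the set {x ∈ ℚ^d : f(x) = 1} is finite, and let ξ = (ξ₁,…,ξ_d) ∈ ℝ^d \ ℚ^d satisfy f(ξ) = 1. Then the ordinary Diophantine exponent of ξ satisfies ω(ξ) ≤ s − 1. -/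
/-- The "ordinary approximation at exponent `γ`" property: there are infinitely many
integer solutions `(q, a₁, …, a_m)` with `q > 0` of `max_j |q θ_j - a_j| < q^(-γ)`.
The ordinary Diophantine exponent `ω(θ)` is the supremum of such `γ`. -/
def OrdApprox {m : ℕ} (θ : Fin m → ℝ) (γ : ℝ) : Prop :=
  {p : ℤ × (Fin m → ℤ) | 0 < p.1 ∧
    ∀ j, |(p.1 : ℝ) * θ j - (p.2 j : ℝ)| < (p.1 : ℝ) ^ (-γ)}.Infinite

open MvPolynomial in
lemma aux_den {d : ℕ} (f : MvPolynomial (Fin d) ℚ) (s : ℕ) (hdeg : f.totalDegree = s) :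
    ∃ D : ℕ, 0 < D ∧ ∀ (q : ℤ) (a : Fin d → ℤ), 0 < q →
      ∃ n : ℤ, eval (fun i => (a i : ℚ) / q) f * D * (q : ℚ) ^ s = n := by
  classical
  refine ⟨∏ m ∈ f.support, (coeff m f).den, Finset.prod_pos fun m _ => (coeff m f).den_pos, ?_⟩
  intro q a hq
  have hq0 : (q : ℚ) ≠ 0 := by exact_mod_cast hq.ne'
  have key : ∀ m ∈ f.support, ∃ n : ℤ, coeff m f * (∏ i, ((a i : ℚ) / q) ^ m i) *
      ((∏ m ∈ f.support, (coeff m f).den : ℕ) : ℚ) * (q : ℚ) ^ s = n := by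
    intro m hm
    obtain ⟨k, hk⟩ := Finset.dvd_prod_of_mem (fun m => (coeff m f).den) hm
    have hle : ∑ i, m i ≤ s := by
      have := le_totalDegree hm
      rw [hdeg, Finsupp.sum_fintype _ _ (fun _ => rfl)] at this
      exact this
    refine ⟨(coeff m f).num * k * (∏ i, a i ^ m i) * q ^ (s - ∑ i, m i), ?_⟩
    rw [hk]
    have h1 : (q : ℚ) ^ s = q ^ (s - ∑ i, m i) * q ^ (∑ i, m i) := by
      rw [← pow_add, Nat.sub_add_cancel hle]
    have h2 : (∏ i, ((a i : ℚ) / q) ^ m i) * q ^ (∑ i, m i) = ∏ i, (a i : ℚ) ^ m i := by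
      rw [← Finset.prod_pow_eq_pow_sum, ← Finset.prod_mul_distrib]
      refine Finset.prod_congr rfl fun i _ => ?_
      rw [← mul_pow, div_mul_cancel₀ _ hq0]
    have h3 : coeff m f * ((coeff m f).den : ℚ) = (coeff m f).num := Rat.mul_den_eq_num _
    push_cast
    rw [h1, ← h2, ← h3]
    ring
  choose! n hn using key
  refine ⟨∑ m ∈ f.support, n m, ?_⟩
  rw [eval_eq', Finset.sum_mul, Finset.sum_mul]
  push_cast
  refine Finset.sum_congr rfl fun m hm => ?_
  rw [← hn m hm]
  push_cast
  rfl

lemma aux_diff {d : ℕ} (f : MvPolynomial (Fin d) ℚ) :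
    Differentiable ℝ (fun x : Fin d → ℝ => MvPolynomial.aeval x f) := by
  induction f using MvPolynomial.induction_on with
  | C a => simp
  | add p q hp hq => simp only [map_add]; exact hp.add hq
  | mul_X p i hp =>
    simp only [map_mul, MvPolynomial.aeval_X]
    exact hp.mul (by fun_prop)

lemma aux_large {m : ℕ} (θ : Fin m → ℝ) (γ : ℝ) (hγ : 0 ≤ γ) (h : OrdApprox θ γ) (N : ℤ) :
    ∃ (q : ℤ) (a : Fin m → ℤ), N < q ∧ 0 < q ∧
      ∀ j, |(q : ℝ) * θ j - (a j : ℝ)| < (q : ℝ) ^ (-γ) := by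
  by_contra! hc
  apply h
  let B : Fin m → ℤ := fun j => ⌈(N : ℝ) * |θ j| + 1⌉
  refine ((Set.finite_Icc (0 : ℤ) N).prod (Set.finite_Icc (-B) B)).subset ?_
  rintro ⟨q, a⟩ ⟨hq, ha⟩
  simp only at hq ha
  have hqN : q ≤ N := by
    by_contra! hlt
    obtain ⟨j, hj⟩ := hc q a hlt hq
    exact absurd (ha j) (not_lt.mpr hj)
  have hab : ∀ j, |a j| ≤ B j := by
    intro j
    have h1 : (q : ℝ) ^ (-γ) ≤ 1 :=
      Real.rpow_le_one_of_one_le_of_nonpos (by exact_mod_cast hq) (by linarith)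
    have h2 := ha j
    have h3 : |(a j : ℝ)| ≤ |(q : ℝ) * θ j| + |(q : ℝ) * θ j - a j| := by
      have := abs_sub ((q : ℝ) * θ j) ((q : ℝ) * θ j - a j)
      simpa using this
    have h4 : |(q : ℝ) * θ j| ≤ N * |θ j| := by
      rw [abs_mul, abs_of_pos (by exact_mod_cast hq : (0 : ℝ) < q)]
      have : (q : ℝ) ≤ N := by exact_mod_cast hqN
      gcongr
    have h5 : (N : ℝ) * |θ j| + 1 ≤ B j := Int.le_ceil _
    have : |(a j : ℝ)| ≤ B j := by linarith
    exact_mod_cast this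
  exact ⟨⟨hq.le, hqN⟩, fun j => (abs_le.mp (hab j)).1, fun j => (abs_le.mp (hab j)).2⟩

/-- Theorem 2b(i): if `f` is a polynomial of degree `s ≥ 2` in `d` variables with rational
coefficients such that `{x ∈ ℚ^d : f(x) = 1}` is finite, and `ξ ∉ ℚ^d` satisfies
`f(ξ) = 1`, then `ω(ξ) ≤ s - 1`. -/
theorem ordinary_exponent_le_of_on_hypersurface
    (d s : ℕ) (hs : 2 ≤ s)
    (f : MvPolynomial (Fin d) ℚ) (hdeg : f.totalDegree = s)
    (hfin : {x : Fin d → ℚ | MvPolynomial.eval x f = 1}.Finite)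
    (ξ : Fin d → ℝ)
    (hirr : ¬ ∃ x : Fin d → ℚ, (fun i => (x i : ℝ)) = ξ)
    (hsurf : MvPolynomial.aeval ξ f = 1) :
    ∀ γ : ℝ, OrdApprox ξ γ → γ ≤ (s : ℝ) - 1 := by
  intro γ happ
  by_contra! hγ
  have hs' : (2 : ℝ) ≤ s := by exact_mod_cast hs
  obtain ⟨D, hD, hden⟩ := aux_den f s hdeg
  obtain ⟨C, hC0, hC⟩ := ((aux_diff f) ξ).isBigO_sub.exists_pos
  have hC := hC.bound
  have hS : ∀ᶠ x in nhds ξ,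
      x ∉ (fun (y : Fin d → ℚ) (i : Fin d) => (y i : ℝ)) '' {x | MvPolynomial.eval x f = 1} := by
    refine (hfin.image _).isClosed.isOpen_compl.mem_nhds ?_
    rintro ⟨y, -, hy⟩
    exact hirr ⟨y, hy⟩
  obtain ⟨ε, hε, hball⟩ := Metric.eventually_nhds_iff.mp (hC.and hS)
  have t1 : ∀ᶠ q : ℝ in Filter.atTop, q ^ (-(γ + 1)) < ε :=
    (tendsto_rpow_neg_atTop (by linarith)).eventually_lt_const hε
  have t2 : ∀ᶠ q : ℝ in Filter.atTop, q ^ (-(γ + 1 - s)) < 1 / (C * D) :=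
    (tendsto_rpow_neg_atTop (by linarith)).eventually_lt_const (by positivity)
  obtain ⟨M, hM⟩ := Filter.eventually_atTop.mp (t1.and t2)
  obtain ⟨q, a, hqN, hq, ha⟩ := aux_large ξ γ (by linarith) happ ⌈M⌉
  have hqM : M ≤ q := (Int.le_ceil M).trans (by exact_mod_cast hqN.le)
  obtain ⟨e1, e2⟩ := hM q hqM
  have hqR : (0 : ℝ) < q := by exact_mod_cast hq
  let y : Fin d → ℚ := fun i => (a i : ℚ) / q
  let x : Fin d → ℝ := fun i => (y i : ℝ)
  have hdist : dist x ξ ≤ (q : ℝ) ^ (-(γ + 1)) := by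
    refine (dist_pi_le_iff (by positivity)).mpr fun i => ?_
    have h1 : x i - ξ i = -((q * ξ i - a i) / q) := by
      simp only [x, y]; push_cast; field_simp; ring
    rw [Real.dist_eq, h1, abs_neg, abs_div, abs_of_pos hqR, div_le_iff₀ hqR]
    have h2 : (q : ℝ) ^ (-(γ + 1)) * q = q ^ (-γ) := by
      rw [← Real.rpow_add_one hqR.ne']; congr 1; ring
    rw [h2]; exact (ha i).le
  obtain ⟨b1, b2⟩ := hball (hdist.trans_lt e1)
  have hev : MvPolynomial.aeval x f = ((MvPolynomial.eval y f : ℚ) : ℝ) := by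
    have := MvPolynomial.aeval_algebraMap_apply ℝ y f
    have hx : x = (algebraMap ℚ ℝ) ∘ y := rfl
    rw [hx]
    simpa using this
  have hne : MvPolynomial.eval y f ≠ 1 := fun h => b2 ⟨y, h, rfl⟩
  obtain ⟨n, hn⟩ := hden q a hq
  change MvPolynomial.eval y f * D * (q : ℚ) ^ s = n at hn
  have hqQ : (0 : ℚ) < q := by exact_mod_cast hq
  have hDQ : (0 : ℚ) < D := by exact_mod_cast hD
  have hk : (MvPolynomial.eval y f - 1) * (D * (q : ℚ) ^ s) = ((n - D * q ^ s : ℤ) : ℚ) := by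
    push_cast; rw [← hn]; ring
  have hk0 : n - D * q ^ s ≠ 0 := by
    intro h0
    rw [h0, Int.cast_zero] at hk
    rcases mul_eq_zero.mp hk with h | h
    · exact hne (sub_eq_zero.mp h)
    · exact absurd h (by positivity)
  have hk1 : (1 : ℝ) ≤ |((n - D * q ^ s : ℤ) : ℝ)| := by
    exact_mod_cast Int.one_le_abs hk0
  have hkR : (((MvPolynomial.eval y f : ℚ) : ℝ) - 1) * (D * (q : ℝ) ^ s)
      = ((n - D * q ^ s : ℤ) : ℝ) := by
    exact_mod_cast congrArg (fun t : ℚ => (t : ℝ)) hk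
  have hDR : (0 : ℝ) < D := by exact_mod_cast hD
  rw [← hkR, abs_mul, abs_of_pos (by positivity : (0 : ℝ) < D * (q : ℝ) ^ s)] at hk1
  rw [hsurf, hev, Real.norm_eq_abs, ← dist_eq_norm] at b1
  have b3 := b1.trans (mul_le_mul_of_nonneg_left hdist hC0.le)
  have h4 : (q : ℝ) ^ (-(γ + 1)) * (q : ℝ) ^ s = q ^ (-(γ + 1 - s)) := by
    rw [← Real.rpow_natCast, ← Real.rpow_add hqR]; congr 1; ring
  have h5 := mul_le_mul_of_nonneg_right b3 (by positivity : (0 : ℝ) ≤ D * (q : ℝ) ^ s)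
  rw [lt_div_iff₀ (by positivity)] at e2
  have h6 : C * (q : ℝ) ^ (-(γ + 1)) * (D * (q : ℝ) ^ s) = q ^ (-(γ + 1 - s)) * (C * D) := by
    rw [← h4]; ring
  linarith
end

section
/- Let s ≥ 2 be an integer, let f be a homogeneous polynomial of degree s in d variables with rational coefficients, let D = D(f) be the common denominator of its coefficients and K = K(f) = sup{|f(x)| : |x| = 1}. Let α = (a₁/q, …, a_d/q) and β = (b₁/r, …, b_d/r) be rational vectors (q, r positive integers, a_i, b_i ∈ ℤ) with f(α − β) ≠ 0. If f(α) = A/q for some integer A, then |α − β|^s ≥ 1/(D K q^{s−1} r^s), where |·| is the Euclidean norm. -/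
theorem aux_hom {d s : ℕ} (f : MvPolynomial (Fin d) ℚ) (hhom : f.IsHomogeneous s)
    {R : Type*} [CommRing R] [Algebra ℚ R] (c : R) (x : Fin d → R) :
    MvPolynomial.aeval (fun i => c * x i) f = c ^ s * MvPolynomial.aeval x f := by
  rw [MvPolynomial.aeval_def, MvPolynomial.aeval_def, MvPolynomial.eval₂_eq, MvPolynomial.eval₂_eq,
    Finset.mul_sum]
  refine Finset.sum_congr rfl fun m hm => ?_
  have h := hhom (MvPolynomial.mem_support_iff.1 hm)
  have h2 : ∑ i ∈ m.support, m i = s := by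
    rw [← h]; simp [Finsupp.weight_apply, Finsupp.sum]
  simp only [mul_pow, Finset.prod_mul_distrib, Finset.prod_pow_eq_pow_sum, h2]
  ring

theorem aux_int {d : ℕ} (f : MvPolynomial (Fin d) ℚ) :
    ∃ F : MvPolynomial (Fin d) ℤ, ∀ x : Fin d → ℤ,
      ((MvPolynomial.eval x F : ℤ) : ℚ) = ((f.support.lcm fun m => (f.coeff m).den : ℕ) : ℚ) *
        MvPolynomial.eval (fun i => (x i : ℚ)) f := by
  set D := f.support.lcm fun m => (f.coeff m).den with hD
  refine ⟨∑ m ∈ f.support, MvPolynomial.monomial m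
    ((f.coeff m).num * ((D / (f.coeff m).den : ℕ) : ℤ)), fun x => ?_⟩
  rw [MvPolynomial.eval_eq' _ f, Finset.mul_sum, map_sum, Int.cast_sum]
  refine Finset.sum_congr rfl fun m hm => ?_
  have h1 : (f.coeff m).den ∣ D := Finset.dvd_lcm hm
  have h0 : ((f.coeff m).den : ℚ) ≠ 0 := by exact_mod_cast (f.coeff m).den_nz
  rw [MvPolynomial.eval_monomial, Finsupp.prod_fintype _ _ (by simp)]
  rw [Int.cast_mul, Int.cast_mul, Int.cast_natCast, Nat.cast_div h1 h0]
  push_cast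
  conv_rhs => rw [← Rat.num_div_den (f.coeff m)]
  ring

theorem aux_mod {d : ℕ} (F : MvPolynomial (Fin d) ℤ) (q : ℤ) (x y : Fin d → ℤ) :
    q ∣ MvPolynomial.eval (fun i => x i - q * y i) F - MvPolynomial.eval x F := by
  rw [← Ideal.mem_span_singleton, ← Ideal.Quotient.eq]
  simp only [MvPolynomial.eval_eq', map_sum, map_mul, map_prod, map_pow, map_sub]
  have : Ideal.Quotient.mk (Ideal.span {q}) q = 0 :=
    Ideal.Quotient.eq_zero_iff_mem.2 (Ideal.mem_span_singleton_self q)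
  simp [this]

theorem aux_bdd {d : ℕ} (f : MvPolynomial (Fin d) ℚ) :
    BddAbove {y : ℝ | ∃ x : Fin d → ℝ,
      ∑ i, x i ^ 2 = 1 ∧ y = |MvPolynomial.aeval x f|} := by
  have hc : Continuous fun x : Fin d → ℝ => |MvPolynomial.aeval x f| := by
    simp only [MvPolynomial.aeval_def, MvPolynomial.eval₂_eq']
    fun_prop
  have hk : IsCompact (Set.Icc (fun _ => -1 : Fin d → ℝ) (fun _ => 1)) := isCompact_Icc
  refine (hk.bddAbove_image hc.continuousOn).mono ?_
  rintro y ⟨x, hx, rfl⟩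
  refine ⟨x, ?_, rfl⟩
  have h : ∀ i, |x i| ≤ 1 := fun i => by
    rw [← sq_le_one_iff_abs_le_one, ← hx]
    exact Finset.single_le_sum (f := fun i => x i ^ 2) (fun i _ => sq_nonneg _) (Finset.mem_univ i)
  exact ⟨fun i => (abs_le.1 (h i)).1, fun i => (abs_le.1 (h i)).2⟩

/-- Lemma 1(i): let `f` be a homogeneous polynomial of degree `s ≥ 2` with rational
coefficients, `D` the common denominator of its coefficients, `K = sup_{|x|=1} |f(x)|`.
If `α = a/q`, `β = b/r` are rational vectors with `f(α - β) ≠ 0` and `f(α) = A/q` for an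
integer `A`, then `|α - β|^s ≥ 1/(D K q^{s-1} r^s)`. -/
theorem simplex_lemma_i
    (d s : ℕ) (hs : 2 ≤ s)
    (f : MvPolynomial (Fin d) ℚ) (hhom : f.IsHomogeneous s)
    (D : ℕ) (hD : D = f.support.lcm fun m => (f.coeff m).den)
    (K : ℝ)
    (hK : K = sSup {y : ℝ | ∃ x : Fin d → ℝ,
      ∑ i, x i ^ 2 = 1 ∧ y = |MvPolynomial.aeval x f|})
    (q r : ℤ) (hq : 0 < q) (hr : 0 < r)
    (a b : Fin d → ℤ)
    (hne : MvPolynomial.eval (fun i => (a i : ℚ) / (q : ℚ) - (b i : ℚ) / (r : ℚ)) f ≠ 0)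
    (A : ℤ)
    (hA : MvPolynomial.eval (fun i => (a i : ℚ) / (q : ℚ)) f = (A : ℚ) / (q : ℚ)) :
    (Real.sqrt (∑ i, ((a i : ℝ) / (q : ℝ) - (b i : ℝ) / (r : ℝ)) ^ 2)) ^ s
      ≥ 1 / (D * K * (q : ℝ) ^ (s - 1) * (r : ℝ) ^ s) := by
  have hqQ : (q : ℚ) ≠ 0 := by exact_mod_cast hq.ne'
  have hrQ : (r : ℚ) ≠ 0 := by exact_mod_cast hr.ne'
  have hqR : (0 : ℝ) < q := by exact_mod_cast hq
  have hrR : (0 : ℝ) < r := by exact_mod_cast hr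
  have hom : ∀ (c : ℚ) (x : Fin d → ℚ), MvPolynomial.eval (fun i => c * x i) f
      = c ^ s * MvPolynomial.eval x f := fun c x => by
    simpa [MvPolynomial.aeval_eq_eval] using aux_hom f hhom c x
  set v : ℚ := MvPolynomial.eval (fun i => (a i : ℚ) / (q : ℚ) - (b i : ℚ) / (r : ℚ)) f with hv
  obtain ⟨k, rfl⟩ : ∃ k, s = k + 2 := ⟨s - 2, by omega⟩
  obtain ⟨F, hF⟩ := aux_int f
  rw [← hD] at hF
  -- integrality
  have hint : ∃ u : ℤ, (D : ℚ) * v * q ^ (k + 1) * r ^ (k + 2) = u := by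
    obtain ⟨t, ht⟩ := aux_mod F q (fun i => r * a i) b
    have e1 := hF (fun i => r * a i - q * b i)
    have e2 := hF (fun i => r * a i)
    have e3 : (fun i => ((r * a i - q * b i : ℤ) : ℚ))
        = fun i => ((q : ℚ) * r) * ((a i : ℚ) / (q : ℚ) - (b i : ℚ) / (r : ℚ)) := by
      funext i; push_cast; field_simp
    have e4 : (fun i => ((r * a i : ℤ) : ℚ))
        = fun i => ((q : ℚ) * r) * ((a i : ℚ) / (q : ℚ)) := by
      funext i; push_cast; field_simp
    rw [e3, hom, ← hv] at e1
    rw [e4, hom, hA] at e2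
    have e5 : ((MvPolynomial.eval (fun i => r * a i - q * b i) F : ℤ) : ℚ)
      - ((MvPolynomial.eval (fun i => r * a i) F : ℤ) : ℚ) = q * t := by exact_mod_cast ht
    rw [e1, e2] at e5
    refine ⟨t + D * q ^ k * r ^ (k + 2) * A, ?_⟩
    apply mul_left_cancel₀ hqQ
    apply mul_left_cancel₀ hqQ
    push_cast
    field_simp at e5
    linear_combination e5
  obtain ⟨u, hu⟩ := hint
  have hD0 : D ≠ 0 := by
    rw [hD, Ne, Finset.lcm_eq_zero_iff]
    simp
  have hDQ : (D : ℚ) ≠ 0 := by exact_mod_cast hD0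
  have hu0 : u ≠ 0 := by
    intro h
    rw [h, Int.cast_zero] at hu
    exact (by positivity : (D : ℚ) * v * q ^ (k + 1) * r ^ (k + 2) ≠ 0) hu
  have hu1 : (1 : ℝ) ≤ |(u : ℝ)| := by exact_mod_cast Int.one_le_abs hu0
  have huR : (D : ℝ) * v * q ^ (k + 1) * r ^ (k + 2) = u := by exact_mod_cast hu
  have hDR : (0 : ℝ) < D := by exact_mod_cast Nat.pos_of_ne_zero hD0
  have hlow : (1 : ℝ) ≤ D * |(v : ℝ)| * q ^ (k + 1) * r ^ (k + 2) := by
    rw [← huR] at hu1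
    rwa [abs_mul, abs_mul, abs_mul, abs_of_pos hDR, abs_of_pos (pow_pos hqR _),
      abs_of_pos (pow_pos hrR _)] at hu1
  -- upper bound
  set x : Fin d → ℝ := fun i => (a i : ℝ) / (q : ℝ) - (b i : ℝ) / (r : ℝ) with hx
  have hvx : MvPolynomial.aeval x f = (v : ℝ) := by
    have := MvPolynomial.aeval_algebraMap_apply ℝ
      (fun i => (a i : ℚ) / (q : ℚ) - (b i : ℚ) / (r : ℚ)) f
    rw [MvPolynomial.aeval_eq_eval] at this
    have h2 : x = (algebraMap ℚ ℝ) ∘ (fun i => (a i : ℚ) / (q : ℚ) - (b i : ℚ) / (r : ℚ)) := by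
      funext i; simp [hx]
    rw [h2, hv]
    simpa using this
  have hvR : (v : ℝ) ≠ 0 := by exact_mod_cast hne
  change (Real.sqrt (∑ i, x i ^ 2)) ^ (k + 2) ≥ _
  set n := Real.sqrt (∑ i, x i ^ 2) with hn
  have hS : 0 ≤ ∑ i, x i ^ 2 := Finset.sum_nonneg fun i _ => sq_nonneg _
  have hn2 : n ^ 2 = ∑ i, x i ^ 2 := Real.sq_sqrt hS
  have hn0 : n ≠ 0 := by
    intro h
    rw [h] at hn2
    have h0 : ∀ i, x i = 0 := fun i => by
      have := (Finset.sum_eq_zero_iff_of_nonneg (fun i _ => sq_nonneg (x i))).1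
        (by rw [← hn2]; simp) i (Finset.mem_univ i)
      simpa using this
    have h1 := aux_hom f hhom (0 : ℝ) x
    have h2 : (fun i => 0 * x i) = x := by funext i; simp [h0 i]
    rw [h2, hvx] at h1
    simp at h1
    exact hne h1
  have hnpos : 0 < n := lt_of_le_of_ne (Real.sqrt_nonneg _) hn0.symm
  have hup : |(v : ℝ)| ≤ n ^ (k + 2) * K := by
    have h1 := aux_hom f hhom n (fun i => n⁻¹ * x i)
    have h2 : (fun i => n * (n⁻¹ * x i)) = x := by funext i; field_simp
    rw [h2, hvx] at h1
    rw [h1, abs_mul, abs_of_pos (pow_pos hnpos _)]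
    refine mul_le_mul_of_nonneg_left ?_ (pow_pos hnpos _).le
    rw [hK]
    refine le_csSup (aux_bdd f) ⟨_, ?_, rfl⟩
    simp only [mul_pow]
    rw [← Finset.mul_sum, ← hn2]
    field_simp
  have hKpos : 0 < K := by
    have := (abs_pos.2 hvR).trans_le hup
    exact pos_of_mul_pos_right this (pow_pos hnpos _).le
  have e : k + 2 - 1 = k + 1 := by omega
  rw [e, ge_iff_le, div_le_iff₀ (by positivity)]
  calc (1 : ℝ) ≤ D * |(v : ℝ)| * q ^ (k + 1) * r ^ (k + 2) := hlow
    _ ≤ D * (n ^ (k + 2) * K) * q ^ (k + 1) * r ^ (k + 2) := by gcongr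
    _ = _ := by ring
end

section
/- Let s ≥ 2 be an integer, let f be a homogeneous polynomial of degree s in d variables with rational coefficients, let D = D(f) be the common denominator of its coefficients and K = K(f) = sup{|f(x)| : |x| = 1}. Let α = (a₁/q, …, a_d/q) and β = (b₁/r, …, b_d/r) be rational vectors (q, r positive integers, a_i, b_i ∈ ℤ) with f(α − β) ≠ 0. If f(α) = A/q and f(β) = B/r for some integers A and B, then |α − β|^s ≥ 1/(D K q^{s−1} r^{s−1}), where |·| is the Euclidean norm. -/
open MvPolynomial in
theorem aux_scale {d s : ℕ} {f : MvPolynomial (Fin d) ℚ} (hf : f.IsHomogeneous s)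
    {R : Type*} [CommRing R] [Algebra ℚ R] (c : R) (x : Fin d → R) :
    aeval (fun i => c * x i) f = c ^ s * aeval x f := by
  rw [aeval_def, aeval_def, eval₂_eq', eval₂_eq', Finset.mul_sum]
  refine Finset.sum_congr rfl fun m hm => ?_
  have h : ∑ i, m i = s := by
    have := hf (mem_support_iff.1 hm)
    rw [← this, Finsupp.weight_apply, Finsupp.sum_fintype] <;> simp
  simp_rw [mul_pow]
  rw [Finset.prod_mul_distrib, Finset.prod_pow_eq_pow_sum, h]
  ring

theorem aux_ms {ι : Type*} (a b : ι → ℤ) (q r : ℤ) (M : Multiset ι) :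
    M = 0 ∨ ∃ k : ℤ, (M.map fun i => r * a i - q * b i).prod =
      r ^ M.card * (M.map a).prod + (-q) ^ M.card * (M.map b).prod + q * r * k := by
  induction M using Multiset.induction_on with
  | empty => left; rfl
  | cons i M ih =>
    right
    rcases ih with rfl | ⟨k, hk⟩
    · exact ⟨0, by simp; ring⟩
    · by_cases h0 : M = 0
      · subst h0; exact ⟨0, by simp; ring⟩
      obtain ⟨n, hn⟩ : ∃ n, M.card = n + 1 :=
        Nat.exists_eq_succ_of_ne_zero (by simpa using h0)
      rw [hn] at hk
      refine ⟨-(a i * (-q) ^ n * (M.map b).prod) - b i * r ^ n * (M.map a).prod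
        + (r * a i - q * b i) * k, ?_⟩
      simp only [Multiset.map_cons, Multiset.prod_cons, Multiset.card_cons, hn, hk]
      ring

theorem aux_fs {d s : ℕ} (hs : 2 ≤ s) (a b : Fin d → ℤ) (q r : ℤ) (m : Fin d →₀ ℕ)
    (hm : ∑ i, m i = s) :
    ∃ k : ℤ, ∏ i, (r * a i - q * b i) ^ m i =
      r ^ s * ∏ i, a i ^ m i + (-q) ^ s * ∏ i, b i ^ m i + q * r * k := by
  have key : ∀ g : Fin d → ℤ, ((Finsupp.toMultiset m).map g).prod = ∏ i, g i ^ m i := by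
    intro g
    rw [Finsupp.toMultiset_map, Finsupp.prod_toMultiset, Finsupp.prod_mapDomain_index,
      Finsupp.prod_fintype] <;> simp [pow_add]
  have hc : (Finsupp.toMultiset m).card = s := by
    rw [Finsupp.card_toMultiset, Finsupp.sum_fintype, ← hm] <;> simp
  rcases aux_ms a b q r (Finsupp.toMultiset m) with h | ⟨k, hk⟩
  · rw [h] at hc; simp at hc; omega
  · rw [key, key, key, hc] at hk
    exact ⟨k, hk⟩

open MvPolynomial in
theorem aux_int_s10 {d s : ℕ} (hs : 2 ≤ s) {f : MvPolynomial (Fin d) ℚ} (hf : f.IsHomogeneous s)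
    (D : ℕ) (hD : D = f.support.lcm fun m => (f.coeff m).den)
    (q r : ℤ) (a b : Fin d → ℤ) :
    ∃ k : ℤ, D * aeval (fun i => (r : ℚ) * a i - q * b i) f =
      (r : ℚ) ^ s * (D * aeval (fun i => (a i : ℚ)) f)
      + (-q : ℚ) ^ s * (D * aeval (fun i => (b i : ℚ)) f) + q * r * k := by
  have hc : ∀ m ∈ f.support, ∃ c : ℤ, (D : ℚ) * f.coeff m = c := by
    intro m hm
    have : (f.coeff m).den ∣ D := hD ▸ Finset.dvd_lcm (f := fun m => (f.coeff m).den) hm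
    obtain ⟨e, he⟩ := this
    refine ⟨e * (f.coeff m).num, ?_⟩
    rw [he]; push_cast
    rw [mul_right_comm, Rat.den_mul_eq_num]; ring
  choose! c hc using hc
  have hdeg : ∀ m ∈ f.support, ∑ i, m i = s := by
    intro m hm
    have := hf (mem_support_iff.1 hm)
    rw [← this, Finsupp.weight_apply, Finsupp.sum_fintype] <;> simp
  choose! k hk using fun (m : Fin d →₀ ℕ) (hm : ∑ i, m i = s) => aux_fs hs a b q r m hm
  refine ⟨∑ m ∈ f.support, c m * k m, ?_⟩
  simp only [aeval_def, eval₂_eq', Finset.mul_sum, Int.cast_sum]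
  rw [← Finset.sum_add_distrib, ← Finset.sum_add_distrib]
  refine Finset.sum_congr rfl fun m hm => ?_
  have h1 := congrArg (Int.cast : ℤ → ℚ) (hk m (hdeg m hm))
  push_cast at h1
  simp only [Algebra.algebraMap_self, RingHom.id_apply]
  rw [h1]; push_cast; rw [← hc m hm]; ring

open MvPolynomial in
theorem aux_K {d s : ℕ} (hs : 2 ≤ s) {f : MvPolynomial (Fin d) ℚ} (hf : f.IsHomogeneous s)
    (K : ℝ)
    (hK : K = sSup {y : ℝ | ∃ x : Fin d → ℝ,
      ∑ i, x i ^ 2 = 1 ∧ y = |MvPolynomial.aeval x f|}) (x : Fin d → ℝ)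
    (hx : aeval x f ≠ 0) :
    |aeval x f| ≤ K * (Real.sqrt (∑ i, x i ^ 2)) ^ s := by
  have hcont : Continuous fun x : Fin d → ℝ => |aeval x f| := by
    simp only [aeval_def, eval₂_eq']
    fun_prop
  have hb : BddAbove {y : ℝ | ∃ x : Fin d → ℝ,
      ∑ i, x i ^ 2 = 1 ∧ y = |MvPolynomial.aeval x f|} := by
    refine ((isCompact_Icc (a := (fun _ => -1 : Fin d → ℝ)) (b := fun _ => 1)).bddAbove_image
      hcont.continuousOn).mono ?_
    rintro y ⟨x, h1, rfl⟩
    refine ⟨x, ?_, rfl⟩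
    have : ∀ i, |x i| ≤ 1 := fun i => by
      rw [← sq_le_one_iff_abs_le_one, ← h1]
      exact Finset.single_le_sum (f := fun i => x i ^ 2) (fun i _ => sq_nonneg _)
        (Finset.mem_univ i)
    exact ⟨fun i => (abs_le.1 (this i)).1, fun i => (abs_le.1 (this i)).2⟩
  set S := ∑ i, x i ^ 2 with hS
  have hS0 : 0 ≤ S := Finset.sum_nonneg fun i _ => sq_nonneg _
  have hSpos : 0 < S := by
    rcases hS0.lt_or_eq with h | h
    · exact h
    exfalso
    have hz : ∀ i, x i = 0 := fun i => by
      have := (Finset.sum_eq_zero_iff_of_nonneg (fun i _ => sq_nonneg (x i))).1 (hS ▸ h.symm) i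
        (Finset.mem_univ i)
      simpa using this
    apply hx
    have := aux_scale hf (0 : ℝ) x
    rw [zero_pow (by omega), zero_mul] at this
    rw [← this]; congr 2; funext i; simp [hz i]
  have hN : 0 < Real.sqrt S := Real.sqrt_pos.2 hSpos
  set N := Real.sqrt S with hNd
  have hNsq : N ^ 2 = S := Real.sq_sqrt hS0
  have h2 : aeval x f = N ^ s * aeval (fun i => x i / N) f := by
    rw [← aux_scale hf]; congr 2; funext i; field_simp
  have h3 : |aeval (fun i => x i / N) f| ≤ K := by
    rw [hK]
    refine le_csSup hb ⟨_, ?_, rfl⟩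
    simp_rw [div_pow]
    rw [← Finset.sum_div, hNsq, ← hS, div_self hSpos.ne']
  rw [h2, abs_mul, abs_of_pos (pow_pos hN s), mul_comm]
  gcongr

/-- Lemma 1(ii): let `f` be a homogeneous polynomial of degree `s ≥ 2` with rational
coefficients, `D` the common denominator of its coefficients, `K = sup_{|x|=1} |f(x)|`.
If `α = a/q`, `β = b/r` are rational vectors with `f(α - β) ≠ 0`, `f(α) = A/q` and
`f(β) = B/r` for integers `A, B`, then `|α - β|^s ≥ 1/(D K q^{s-1} r^{s-1})`. -/
theorem simplex_lemma_ii
    (d s : ℕ) (hs : 2 ≤ s)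
    (f : MvPolynomial (Fin d) ℚ) (hhom : f.IsHomogeneous s)
    (D : ℕ) (hD : D = f.support.lcm fun m => (f.coeff m).den)
    (K : ℝ)
    (hK : K = sSup {y : ℝ | ∃ x : Fin d → ℝ,
      ∑ i, x i ^ 2 = 1 ∧ y = |MvPolynomial.aeval x f|})
    (q r : ℤ) (hq : 0 < q) (hr : 0 < r)
    (a b : Fin d → ℤ)
    (hne : MvPolynomial.eval (fun i => (a i : ℚ) / (q : ℚ) - (b i : ℚ) / (r : ℚ)) f ≠ 0)
    (A B : ℤ)
    (hA : MvPolynomial.eval (fun i => (a i : ℚ) / (q : ℚ)) f = (A : ℚ) / (q : ℚ))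
    (hB : MvPolynomial.eval (fun i => (b i : ℚ) / (r : ℚ)) f = (B : ℚ) / (r : ℚ)) :
    (Real.sqrt (∑ i, ((a i : ℝ) / (q : ℝ) - (b i : ℝ) / (r : ℝ)) ^ 2)) ^ s
      ≥ 1 / (D * K * (q : ℝ) ^ (s - 1) * (r : ℝ) ^ (s - 1)) := by
  have hq' : (q : ℚ) ≠ 0 := by exact_mod_cast hq.ne'
  have hr' : (r : ℚ) ≠ 0 := by exact_mod_cast hr.ne'
  have hDpos : 0 < D := by
    rw [Nat.pos_iff_ne_zero, hD, Ne, Finset.lcm_eq_zero_iff]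
    simp
  obtain ⟨k, hk⟩ := aux_int_s10 hs hhom D hD q r a b
  set F : ℚ := MvPolynomial.eval (fun i => (a i : ℚ) / (q : ℚ) - (b i : ℚ) / (r : ℚ)) f with hF
  obtain ⟨t, rfl⟩ : ∃ t, s = t + 2 := ⟨s - 2, by omega⟩
  have e1 : MvPolynomial.aeval (fun i => (r : ℚ) * a i - q * b i) f
      = ((q : ℚ) * r) ^ (t + 2) * F := by
    rw [hF, ← MvPolynomial.coe_aeval_eq_eval, RingHom.coe_coe, ← aux_scale hhom]
    congr 2; funext i; field_simp
  have e2 : MvPolynomial.aeval (fun i => (a i : ℚ)) f = (q : ℚ) ^ (t + 1) * A := by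
    have : (q : ℚ) ^ (t + 1) * A = q ^ (t + 2) * (A / q) := by field_simp; ring
    rw [this, ← hA, ← MvPolynomial.coe_aeval_eq_eval, RingHom.coe_coe, ← aux_scale hhom]
    congr 2; funext i; field_simp
  have e3 : MvPolynomial.aeval (fun i => (b i : ℚ)) f = (r : ℚ) ^ (t + 1) * B := by
    have : (r : ℚ) ^ (t + 1) * B = r ^ (t + 2) * (B / r) := by field_simp; ring
    rw [this, ← hB, ← MvPolynomial.coe_aeval_eq_eval, RingHom.coe_coe, ← aux_scale hhom]
    congr 2; funext i; field_simp
  rw [e1, e2, e3] at hk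
  have hint : ∃ n : ℤ, (D : ℚ) * F * q ^ (t + 1) * r ^ (t + 1) = n := by
    refine ⟨r ^ (t + 1) * D * q ^ t * A + (-1) ^ (t + 2) * q ^ (t + 1) * D * r ^ t * B + k, ?_⟩
    apply mul_left_cancel₀ (mul_ne_zero hq' hr')
    push_cast
    rw [neg_pow] at hk
    linear_combination hk
  obtain ⟨n, hn⟩ := hint
  have hn0 : n ≠ 0 := by
    rintro rfl
    have : (D : ℚ) ≠ 0 := by exact_mod_cast hDpos.ne'
    have : (D : ℚ) * F * q ^ (t + 1) * r ^ (t + 1) ≠ 0 := by positivity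
    exact this (by simpa using hn)
  have hFR : MvPolynomial.aeval (fun i => (a i : ℝ) / (q : ℝ) - (b i : ℝ) / (r : ℝ)) f
      = (F : ℝ) := by
    have := MvPolynomial.aeval_algebraMap_apply ℝ
      (fun i => (a i : ℚ) / (q : ℚ) - (b i : ℚ) / (r : ℚ)) f
    rw [hF, ← MvPolynomial.coe_aeval_eq_eval, RingHom.coe_coe]
    simpa [Function.comp_def] using this
  have hF0 : (F : ℝ) ≠ 0 := by exact_mod_cast hne
  have hb := aux_K hs hhom K hK _ (hFR ▸ hF0)
  rw [hFR] at hb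
  set N := Real.sqrt (∑ i, ((a i : ℝ) / (q : ℝ) - (b i : ℝ) / (r : ℝ)) ^ 2) with hN
  have hN0 : 0 ≤ N ^ (t + 2) := pow_nonneg (Real.sqrt_nonneg _) _
  have hKpos : 0 < K := by
    have : 0 < K * N ^ (t + 2) := (abs_pos.2 hF0).trans_le hb
    exact pos_of_mul_pos_left this hN0
  have hqR : (0 : ℝ) < q := by exact_mod_cast hq
  have hrR : (0 : ℝ) < r := by exact_mod_cast hr
  have hDR : (0 : ℝ) < D := by exact_mod_cast hDpos
  have hnR : (D : ℝ) * F * q ^ (t + 1) * r ^ (t + 1) = n := by exact_mod_cast hn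
  have h1 : (1 : ℝ) ≤ D * |(F : ℝ)| * q ^ (t + 1) * r ^ (t + 1) := by
    have h : (1 : ℝ) ≤ |(n : ℝ)| := by exact_mod_cast Int.one_le_abs hn0
    rw [← hnR] at h
    simpa [abs_mul, abs_of_pos, hqR, hrR, hDR] using h
  have hs1 : t + 2 - 1 = t + 1 := by omega
  rw [ge_iff_le, hs1, div_le_iff₀ (by positivity)]
  calc (1 : ℝ) ≤ D * |(F : ℝ)| * q ^ (t + 1) * r ^ (t + 1) := h1
    _ ≤ D * (K * N ^ (t + 2)) * q ^ (t + 1) * r ^ (t + 1) := by gcongr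
    _ = _ := by ring
end

section
/- Let s ≥ 2 be an integer, let f be a homogeneous polynomial of degree s in d variables with rational coefficients, and let D = D(f) be the common denominator of its coefficients. Let q be a positive integer and a₁,…,a_d, A ∈ ℤ with gcd(q, a₁, …, a_d, A) = 1, and suppose f(a₁/q, …, a_d/q) = A/q. Then Δ^s divides D·q^{s−1}, where Δ = gcd(q, a₁, …, a_d); in particular Δ ≤ (D q^{s−1})^{1/s} = O(q^{(s−1)/s}). -/
/-- Lemma 2: let `f` be a homogeneous polynomial of degree `s ≥ 2` in `d` variables with
rational coefficients and `D` the common denominator of its coefficients. Suppose `q ≥ 1`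
and `a₁, …, a_d, A` are integers with `gcd(q, a₁, …, a_d, A) = 1` and
`f(a₁/q, …, a_d/q) = A/q`. Then `Δ^s ∣ D q^{s-1}` where `Δ = gcd(q, a₁, …, a_d)`; in
particular `Δ ≤ (D q^{s-1})^{1/s}`. -/
theorem gcd_bound_lemma
    (d s : ℕ) (hs : 2 ≤ s)
    (f : MvPolynomial (Fin d) ℚ) (hhom : f.IsHomogeneous s)
    (D : ℕ) (hD : D = f.support.lcm fun m => (f.coeff m).den)
    (q : ℤ) (hq : 0 < q) (a : Fin d → ℤ) (A : ℤ)
    (hgcd : Int.gcd (Int.gcd q (Finset.univ.gcd a)) A = 1)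
    (heval : MvPolynomial.eval (fun i => (a i : ℚ) / (q : ℚ)) f = (A : ℚ) / (q : ℚ)) :
    ((Int.gcd q (Finset.univ.gcd a) : ℤ)) ^ s ∣ (D : ℤ) * q ^ (s - 1) ∧
    ((Int.gcd q (Finset.univ.gcd a) : ℝ))
      ≤ ((D : ℝ) * (q : ℝ) ^ (s - 1)) ^ ((1 : ℝ) / s) := by
  set Δ : ℕ := Int.gcd q (Finset.univ.gcd a) with hΔ
  have hb : ∀ i, ∃ b : ℤ, a i = Δ * b := fun i =>
    (Int.gcd_dvd_right q (Finset.univ.gcd a)).trans (Finset.gcd_dvd (Finset.mem_univ i))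
  choose b hb using hb
  have hDpos : 0 < D := by
    rw [Nat.pos_iff_ne_zero, hD]
    intro h
    rw [Finset.lcm_eq_zero_iff] at h
    obtain ⟨m, _, hm⟩ := h
    exact (f.coeff m).den_ne_zero hm
  have hqQ : (q : ℚ) ≠ 0 := by exact_mod_cast hq.ne'
  have hc : ∀ m : Fin d →₀ ℕ, ∃ n : ℤ, m ∈ f.support → (D : ℚ) * f.coeff m = n := by
    intro m
    by_cases hm : m ∈ f.support
    · have h1 : (f.coeff m).den ∣ D := by
        rw [hD]
        exact Finset.dvd_lcm (f := fun m => (f.coeff m).den) hm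
      obtain ⟨k, hk⟩ := h1
      refine ⟨k * (f.coeff m).num, fun _ => ?_⟩
      rw [hk]
      push_cast
      rw [mul_comm ((f.coeff m).den : ℚ), mul_assoc, Rat.den_mul_eq_num]
    · exact ⟨0, fun h => absurd h hm⟩
  choose c hc using hc
  have hev : (D : ℚ) * MvPolynomial.eval (fun i => (a i : ℚ) / (q : ℚ)) f
      = ((Δ : ℚ) / q) ^ s * ((∑ m ∈ f.support, c m * ∏ i, b i ^ m i : ℤ) : ℚ) := by
    rw [MvPolynomial.eval_eq', Finset.mul_sum]
    push_cast
    rw [Finset.mul_sum]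
    refine Finset.sum_congr rfl fun m hm => ?_
    have hdeg : ∑ i, m i = s := by
      have := hhom (MvPolynomial.mem_support_iff.mp hm)
      rw [Finsupp.weight_apply, Finsupp.sum_fintype _ _ (by simp)] at this
      simpa using this
    have : ∏ i, ((a i : ℚ) / q) ^ m i = ((Δ : ℚ) / q) ^ s * ∏ i, (b i : ℚ) ^ m i := by
      rw [← hdeg, ← Finset.prod_pow_eq_pow_sum, ← Finset.prod_mul_distrib]
      refine Finset.prod_congr rfl fun i _ => ?_
      rw [← mul_pow, hb i]
      push_cast
      ring
    rw [this, ← hc m hm]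
    ring
  rw [heval] at hev
  generalize (∑ m ∈ f.support, c m * ∏ i, b i ^ m i : ℤ) = N at hev
  have key : (Δ : ℤ) ^ s * N = D * q ^ (s - 1) * A := by
    obtain ⟨t, rfl⟩ : ∃ t, s = t + 1 := ⟨s - 1, by omega⟩
    have : (Δ : ℚ) ^ (t + 1) * N = D * q ^ t * A := by
      rw [div_pow] at hev
      field_simp at hev
      have h2 : (q : ℚ) * (Δ ^ (t + 1) * N) = q * (D * q ^ t * A) := by
        rw [pow_succ (q : ℚ)] at hev
        linear_combination -hev
      exact mul_left_cancel₀ hqQ h2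
    simpa using (by exact_mod_cast this : (Δ : ℤ) ^ (t + 1) * N = D * q ^ t * A)
  have hdvd : (Δ : ℤ) ^ s ∣ (D : ℤ) * q ^ (s - 1) := by
    have hco : IsCoprime ((Δ : ℤ) ^ s) A := (Int.isCoprime_iff_gcd_eq_one.mpr hgcd).pow_left
    exact hco.dvd_of_dvd_mul_right ⟨N, key.symm⟩
  refine ⟨hdvd, ?_⟩
  have hle : (Δ : ℤ) ^ s ≤ (D : ℤ) * q ^ (s - 1) :=
    Int.le_of_dvd (by positivity) hdvd
  have hleR : (Δ : ℝ) ^ s ≤ (D : ℝ) * (q : ℝ) ^ (s - 1) := by exact_mod_cast hle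
  have hs0 : s ≠ 0 := by omega
  calc (Δ : ℝ) = ((Δ : ℝ) ^ s) ^ ((1 : ℝ) / s) := by
        rw [one_div, Real.pow_rpow_inv_natCast (by positivity) hs0]
    _ ≤ _ := Real.rpow_le_rpow (by positivity) hleR (by positivity)
end
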